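/- arXiv:1612.05455 — 2 statements merged into one kernel-verified Lean document; each statement's English description precedes it below -/
import Mathlib

section
/- Let $a > 0$, $\nu \in \mathbb{C}$ with $0 < \mathrm{Re}\,\nu < 1/2$, $-1 < \mu < 0$, and let $g^*$ be a function on the vertical line $\mathrm{Re}\,s = \mu$ with $s\, g^*(s)$ integrable. Then for each fixed $x > a$, $\lim_{N \to \infty} \int_{\mu - i\infty}^{\mu + i\infty} g^*(s) \int_N^\infty C_\nu(x\xi, a\xi)\, \xi^{-s}\, d\xi\, ds = 0$. -/
/-!
The kernel `C_ν(xξ, aξ)` decays only like `1 / ξ`, but it oscillates, and the oscillation has an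
explicit primitive. For non-integer `ν` the kernel is, up to the factor `1 / sin (π ν)`, the cross
product of `J_ν` and `J_{-ν}` (`weberC_eq`; the limit defining `Y_ν` is evaluated using continuity
of `J` in its order). In Liouville normal form, `√t J_{±ν}(t)` both solve
`u'' = -(1 + (1/4 - ν²) / t²) u`, with the same potential (`hasDerivAt_besselU'`). In the derivative
of a Wronskian of `u(xξ)` and `v(aξ)` the potentials cancel, which gives Lommel's formula
`ξ C_ν(xξ, aξ) = G'(ξ)` (`exists_bounded_primitive`). Here `G` is bounded at infinity, because an
energy estimate bounds every solution of the equation and its derivative (`bounded_of_ode`); no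
asymptotic expansion of the Bessel functions is needed.

Integrating `G'(ξ) ξ ^ (-1 - s)` by parts shows that the improper integral over `[N, ∞)` exists and
is `O((1 + |1 + s|) N ^ (-1 - Re s))` (`norm_limUnder_le`). On the line `Re s = μ` with `-1 < μ < 0`
this is `O(|s| N ^ (-1 - μ))`, so the outer integral is at most a constant times
`N ^ (-1 - μ) ∫ |s gs(s)|`, which tends to `0`.
-/

open MeasureTheory Filter Set Topology Complex intervalIntegral

/-- Bessel function of the first kind of complex order `ν`. -/
noncomputable def besselJ (ν z : ℂ) : ℂ :=
  ∑' n : ℕ, ((-1 : ℂ) ^ n / (Complex.Gamma (n + 1) * Complex.Gamma (n + ν + 1))) *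
    (z / 2) ^ (2 * (n : ℂ) + ν)

/-- Bessel function of the second kind of complex order `ν`, defined by the usual
limit formula (which for non-integer order reduces to
`(J ν z * cos (π ν) - J (-ν) z) / sin (π ν)`). -/
noncomputable def besselY (ν z : ℂ) : ℂ :=
  limUnder (𝓝[≠] ν) fun μ =>
    (besselJ μ z * Complex.cos (Real.pi * μ) - besselJ (-μ) z) / Complex.sin (Real.pi * μ)

/-- The Weber kernel `C_ν(α, β) = J_ν(α) Y_ν(β) - Y_ν(α) J_ν(β)`. -/
noncomputable def weberC (ν α β : ℂ) : ℂ :=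
  besselJ ν α * besselY ν β - besselY ν α * besselJ ν β

/-- Gauss hypergeometric series `₂F₁(a, b; c; z)`. -/
noncomputable def hyp2F1 (a b c z : ℂ) : ℂ :=
  ∑' n : ℕ, ((ascPochhammer ℂ n).eval a * (ascPochhammer ℂ n).eval b /
    ((ascPochhammer ℂ n).eval c * (n.factorial : ℂ))) * z ^ n

/-- The associated Legendre function of the second kind `Q_μ^ν(z)` (order `ν`, degree `μ`),
for `z` off the cut `(-∞, 1]`. -/
noncomputable def legendreQ (ν μ z : ℂ) : ℂ :=
  Complex.exp (ν * Real.pi * Complex.I) * (Real.sqrt Real.pi : ℂ) * 2 ^ (-μ - 1) *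
    (Complex.Gamma (μ + ν + 1) / Complex.Gamma (μ + 3 / 2)) *
    z ^ (-μ - ν - 1) * (z ^ 2 - 1) ^ (ν / 2) *
    hyp2F1 ((μ + ν + 2) / 2) ((μ + ν + 1) / 2) (μ + 3 / 2) (1 / z ^ 2)

/-- `g` belongs to the class `𝓜₀,₁⁻¹(L_c)` on the vertical line `Re s = μ`, with Mellin
transform `gs`:  `s ↦ s * gs s` is integrable on the line, and `g` is recovered from `gs`
by the inverse Mellin transform. -/
def MellinClass01 (μ : ℝ) (g : ℝ → ℂ) (gs : ℂ → ℂ) : Prop :=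
  (Integrable fun τ : ℝ => ((μ : ℂ) + τ * Complex.I) * gs ((μ : ℂ) + τ * Complex.I)) ∧
  ∀ x : ℝ, 0 < x →
    g x = (2 * Real.pi * Complex.I)⁻¹ *
      (Complex.I * ∫ τ : ℝ, gs ((μ : ℂ) + τ * Complex.I) * (x : ℂ) ^ (-((μ : ℂ) + τ * Complex.I)))

/-! ### The power series of `J_ν`, its derivative and recurrence -/

/-- The coefficients of the entire function `besselEntire ν`. -/
noncomputable def besselCoeff (ν : ℂ) (n : ℕ) : ℂ :=
  (-1 : ℂ) ^ n / (Complex.Gamma (n + 1) * Complex.Gamma (n + ν + 1))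

/-- The entire function `h_ν(w) = ∑ (-1)ⁿ wⁿ / (n! Γ(n + ν + 1))`, for which
`J_ν(z) = (z / 2) ^ ν * h_ν(z² / 4)`. -/
noncomputable def besselEntire (ν w : ℂ) : ℂ := ∑' n : ℕ, besselCoeff ν n * w ^ n

lemma norm_inv_Gamma_le {ν : ℂ} (hν : -1 / 2 ≤ ν.re) (n : ℕ) :
    ‖(Complex.Gamma (n + ν + 1))⁻¹‖ ≤ 2 ^ n * ‖(Complex.Gamma (ν + 1))⁻¹‖ := by
  induction n with
  | zero => simp
  | succ n ih =>
    have hn : (0 : ℝ) ≤ n := Nat.cast_nonneg n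
    have hre : 1 / 2 ≤ ((n : ℂ) + ν + 1).re := by
      simp only [add_re, natCast_re, one_re]; linarith
    have hnorm : 1 / 2 ≤ ‖(n : ℂ) + ν + 1‖ := hre.trans (Complex.re_le_norm _)
    have hne : (n : ℂ) + ν + 1 ≠ 0 := by
      rw [← norm_pos_iff]; linarith
    have e : ((n + 1 : ℕ) : ℂ) + ν + 1 = ((n : ℂ) + ν + 1) + 1 := by push_cast; ring
    rw [e, Complex.Gamma_add_one _ hne, mul_inv, norm_mul, pow_succ, norm_inv]
    have h2 : ‖(n : ℂ) + ν + 1‖⁻¹ ≤ 2 := by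
      rw [inv_le_comm₀ (by linarith) (by norm_num)]; linarith
    calc _ ≤ 2 * (2 ^ n * ‖(Complex.Gamma (ν + 1))⁻¹‖) := by gcongr
      _ = _ := by ring

lemma norm_besselCoeff_le {ν : ℂ} (hν : -1 / 2 ≤ ν.re) (n : ℕ) :
    ‖besselCoeff ν n‖ ≤ ‖(Complex.Gamma (ν + 1))⁻¹‖ * (2 ^ n / n.factorial) := by
  have h := norm_inv_Gamma_le hν n
  rw [besselCoeff, Complex.Gamma_nat_eq_factorial, norm_div, norm_mul, norm_pow, norm_neg,
    norm_one, one_pow, Complex.norm_natCast]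
  rw [norm_inv] at h
  calc (1 : ℝ) / (n.factorial * ‖Complex.Gamma (n + ν + 1)‖)
      = ‖Complex.Gamma (n + ν + 1)‖⁻¹ / n.factorial := by
        rw [one_div, mul_inv, div_eq_mul_inv, mul_comm]
    _ ≤ (2 ^ n * ‖(Complex.Gamma (ν + 1))⁻¹‖) / n.factorial := by gcongr
    _ = _ := by ring

lemma summable_besselEntire {ν : ℂ} (hν : -1 / 2 ≤ ν.re) (w : ℂ) :
    Summable fun n : ℕ => besselCoeff ν n * w ^ n := by
  refine Summable.of_norm_bounded
    (g := fun n : ℕ => ‖(Complex.Gamma (ν + 1))⁻¹‖ * ((2 * ‖w‖) ^ n / n.factorial))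
    ((Real.summable_pow_div_factorial _).mul_left _) fun n => ?_
  rw [norm_mul, norm_pow]
  calc _ ≤ ‖(Complex.Gamma (ν + 1))⁻¹‖ * (2 ^ n / n.factorial) * ‖w‖ ^ n := by
        gcongr; exact norm_besselCoeff_le hν n
    _ = _ := by rw [mul_pow]; ring

lemma norm_besselCoeff_deriv_le {ν : ℂ} (hν : -1 / 2 ≤ ν.re) {R : ℝ} (hR : 1 ≤ R) {w : ℂ}
    (hw : ‖w‖ ≤ R) (n : ℕ) :
    ‖besselCoeff ν n * (n * w ^ (n - 1))‖ ≤
      ‖(Complex.Gamma (ν + 1))⁻¹‖ * ((4 * R) ^ n / n.factorial) := by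
  rw [norm_mul, norm_mul, norm_pow, Complex.norm_natCast]
  have h1 : (n : ℝ) ≤ 2 ^ n := by exact_mod_cast Nat.lt_two_pow_self.le
  have h2 : ‖w‖ ^ (n - 1) ≤ R ^ n :=
    (pow_le_pow_left₀ (norm_nonneg _) hw _).trans (pow_le_pow_right₀ hR (Nat.sub_le _ _))
  calc _ ≤ ‖(Complex.Gamma (ν + 1))⁻¹‖ * (2 ^ n / n.factorial) * (2 ^ n * R ^ n) := by
        gcongr; exact norm_besselCoeff_le hν n
    _ = _ := by
        rw [show (4 : ℝ) = 2 * 2 by norm_num, mul_pow, mul_pow]; ring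

lemma besselCoeff_succ (ν : ℂ) (n : ℕ) :
    besselCoeff ν (n + 1) * ((n + 1 : ℕ) : ℂ) = -besselCoeff (ν + 1) n := by
  have hn : ((n : ℂ) + 1) ≠ 0 := Nat.cast_add_one_ne_zero n
  have e : ((n + 1 : ℕ) : ℂ) + ν + 1 = (n : ℂ) + (ν + 1) + 1 := by push_cast; ring
  rw [besselCoeff, besselCoeff, e, Nat.cast_succ, Complex.Gamma_add_one _ hn, pow_succ]
  by_cases h : Complex.Gamma ((n : ℂ) + (ν + 1) + 1) = 0
  · simp [h]
  by_cases h' : Complex.Gamma ((n : ℂ) + 1) = 0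
  · simp [h']
  field_simp

lemma besselCoeff_order {ν : ℂ} (hν : -1 / 2 ≤ ν.re) (n : ℕ) :
    besselCoeff ν n = (n + ν + 1) * besselCoeff (ν + 1) n := by
  have hn : (0 : ℝ) ≤ n := Nat.cast_nonneg n
  have hre : 1 / 2 ≤ ((n : ℂ) + ν + 1).re := by
    simp only [add_re, natCast_re, one_re]; linarith
  have hne : (n : ℂ) + ν + 1 ≠ 0 := by
    intro h; rw [h] at hre; norm_num at hre
  rw [besselCoeff, besselCoeff, show (n : ℂ) + (ν + 1) + 1 = (n + ν + 1) + 1 by ring,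
    Complex.Gamma_add_one _ hne]
  by_cases h : Complex.Gamma ((n : ℂ) + ν + 1) = 0
  · simp [h]
  by_cases h' : Complex.Gamma ((n : ℂ) + 1) = 0
  · simp [h']
  field_simp

lemma hasSum_besselEntire_deriv {ν : ℂ} (hν : -1 / 2 ≤ ν.re) (w : ℂ) :
    HasSum (fun n : ℕ => besselCoeff ν n * (n * w ^ (n - 1))) (-besselEntire (ν + 1) w) := by
  have hν' : -1 / 2 ≤ (ν + 1).re := by rw [add_re, one_re]; linarith
  rw [← hasSum_nat_add_iff' 1]
  simp only [Finset.sum_range_one, Nat.cast_zero, zero_mul, mul_zero, sub_zero,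
    Nat.add_sub_cancel]
  refine (summable_besselEntire hν' w).hasSum.neg.congr_fun fun n => ?_
  rw [← mul_assoc, besselCoeff_succ]; ring

lemma hasDerivAt_besselEntire {ν : ℂ} (hν : -1 / 2 ≤ ν.re) (w : ℂ) :
    HasDerivAt (besselEntire ν) (-besselEntire (ν + 1) w) w := by
  rw [← (hasSum_besselEntire_deriv hν w).tsum_eq]
  have hR : (1 : ℝ) ≤ ‖w‖ + 1 := by linarith [norm_nonneg w]
  have hb : ∀ y ∈ Metric.ball (0 : ℂ) (‖w‖ + 1), ∀ n : ℕ,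
      ‖besselCoeff ν n * (n * y ^ (n - 1))‖ ≤
        ‖(Complex.Gamma (ν + 1))⁻¹‖ * ((4 * (‖w‖ + 1)) ^ n / n.factorial) := fun y hy n =>
    norm_besselCoeff_deriv_le hν hR (mem_ball_zero_iff.1 hy).le n
  exact hasDerivAt_tsum_of_isPreconnected (𝕜 := ℂ)
    (g := fun (n : ℕ) (y : ℂ) => besselCoeff ν n * y ^ n)
    (g' := fun (n : ℕ) (y : ℂ) => besselCoeff ν n * (n * y ^ (n - 1)))
    ((Real.summable_pow_div_factorial _).mul_left _) Metric.isOpen_ball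
    (convex_ball (0 : ℂ) (‖w‖ + 1)).isPreconnected
    (fun n y _ => (hasDerivAt_pow n y).const_mul _) (fun n y hy => hb y hy n)
    (Metric.mem_ball_self (by linarith)) (summable_besselEntire hν 0)
    (mem_ball_zero_iff.2 (lt_add_one _))

lemma besselEntire_recurrence {ν : ℂ} (hν : -1 / 2 ≤ ν.re) (w : ℂ) :
    besselEntire ν w = (ν + 1) * besselEntire (ν + 1) w - w * besselEntire (ν + 2) w := by
  have hν' : -1 / 2 ≤ (ν + 1).re := by rw [add_re, one_re]; linarith
  have h1 := (summable_besselEntire hν' w).hasSum.mul_left (ν + 1)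
  have h2 := (hasSum_besselEntire_deriv hν' w).mul_left w
  have h3 := h1.add h2
  rw [show ν + 1 + 1 = ν + 2 by ring] at h3
  have : besselEntire ν w = _ := Eq.trans (tsum_congr fun n => ?_) h3.tsum_eq
  · rw [this]; change _ * besselEntire _ _ + _ = _; ring
  · rw [besselCoeff_order hν]
    rcases n with _ | n
    · simp
    · rw [Nat.add_sub_cancel, pow_succ]; ring

lemma besselJ_eq (ν : ℂ) {ξ : ℝ} (hξ : 0 < ξ) :
    besselJ ν ξ = ((ξ : ℂ) / 2) ^ ν * besselEntire ν ((ξ : ℂ) ^ 2 / 4) := by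
  have h0 : (ξ : ℂ) / 2 ≠ 0 := by
    exact div_ne_zero (by exact_mod_cast hξ.ne') two_ne_zero
  rw [besselJ, besselEntire, ← tsum_mul_left]
  refine tsum_congr fun n => ?_
  rw [Complex.cpow_add _ _ h0, besselCoeff,
    show (2 * (n : ℂ)) = ((2 * n : ℕ) : ℂ) by push_cast; ring, Complex.cpow_natCast, pow_mul,
    div_pow (ξ : ℂ) 2 2]
  norm_num
  ring

lemma hasDerivAt_besselJ {ν : ℂ} (hν : -1 / 2 ≤ ν.re) {ξ : ℝ} (hξ : 0 < ξ) :
    HasDerivAt (fun t : ℝ => besselJ ν t) (ν / ξ * besselJ ν ξ - besselJ (ν + 1) ξ) ξ := by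
  have hξ0 : (ξ : ℂ) ≠ 0 := by exact_mod_cast hξ.ne'
  have h0 : (ξ : ℂ) / 2 ≠ 0 := div_ne_zero hξ0 two_ne_zero
  have hs : (ξ : ℂ) / 2 ∈ Complex.slitPlane := by
    left; simpa using hξ
  have h1 : HasDerivAt (fun z : ℂ => (z / 2) ^ ν) (ν * ((ξ : ℂ) / 2) ^ (ν - 1) * (1 / 2)) ξ :=
    ((hasDerivAt_id (ξ : ℂ)).div_const 2).cpow_const hs
  have h2 : HasDerivAt (fun z : ℂ => besselEntire ν (z ^ 2 / 4))
      (-besselEntire (ν + 1) ((ξ : ℂ) ^ 2 / 4) * (2 * ξ / 4)) ξ := by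
    have := ((hasDerivAt_pow 2 (ξ : ℂ)).div_const 4)
    have h3 := HasDerivAt.comp (ξ : ℂ) (hasDerivAt_besselEntire hν ((ξ : ℂ) ^ 2 / 4)) this
    exact h3.congr_deriv (by simp)
  have h3 := (h1.mul h2).comp_ofReal
  refine (h3.congr_of_eventuallyEq ?_).congr_deriv ?_
  · filter_upwards [lt_mem_nhds hξ] with t ht
    exact besselJ_eq ν ht
  · rw [besselJ_eq ν hξ, besselJ_eq (ν + 1) hξ, Complex.cpow_add _ _ h0, Complex.cpow_sub _ _ h0,
      Complex.cpow_one]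
    field_simp
    ring

lemma besselJ_recurrence {ν : ℂ} (hν : -1 / 2 ≤ ν.re) {ξ : ℝ} (hξ : 0 < ξ) :
    besselJ (ν + 2) ξ = 2 * (ν + 1) / ξ * besselJ (ν + 1) ξ - besselJ ν ξ := by
  have hξ0 : (ξ : ℂ) ≠ 0 := by exact_mod_cast hξ.ne'
  have h0 : (ξ : ℂ) / 2 ≠ 0 := div_ne_zero hξ0 two_ne_zero
  rw [besselJ_eq ν hξ, besselJ_eq (ν + 1) hξ, besselJ_eq (ν + 2) hξ, besselEntire_recurrence hν,
    Complex.cpow_add _ _ h0, Complex.cpow_add _ _ h0, Complex.cpow_one, Complex.cpow_ofNat]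
  field_simp
  ring

lemma hasDerivAt_besselJ_succ {ν : ℂ} (hν : -1 / 2 ≤ ν.re) {ξ : ℝ} (hξ : 0 < ξ) :
    HasDerivAt (fun t : ℝ => besselJ (ν + 1) t)
      (besselJ ν ξ - (ν + 1) / ξ * besselJ (ν + 1) ξ) ξ := by
  have hν' : -1 / 2 ≤ (ν + 1).re := by rw [add_re, one_re]; linarith
  refine (hasDerivAt_besselJ hν' hξ).congr_deriv ?_
  rw [show ν + 1 + 1 = ν + 2 by ring, besselJ_recurrence hν hξ]
  ring

/-! ### Dependence on the order, and the Weber kernel for non-integer order -/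

/-- `J` is continuous in its order, by dominated convergence in the defining series. -/
lemma continuousAt_besselJ_order {ν : ℂ} (hν : -1 / 2 < ν.re) {ξ : ℝ} (hξ : 0 < ξ) :
    ContinuousAt (fun m : ℂ => besselJ m ξ) ν := by
  have h0 : (ξ : ℂ) / 2 ≠ 0 := div_ne_zero (by exact_mod_cast hξ.ne') two_ne_zero
  have hG : Continuous fun m : ℂ => (Complex.Gamma m)⁻¹ :=
    Complex.differentiable_one_div_Gamma.continuous
  have hE : ContinuousAt (fun m : ℂ => besselEntire m ((ξ : ℂ) ^ 2 / 4)) ν := by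
    set w : ℂ := (ξ : ℂ) ^ 2 / 4
    have hG1 : Continuous fun m : ℂ => ‖(Complex.Gamma (m + 1))⁻¹‖ :=
      (hG.comp (continuous_id.add continuous_const)).norm
    refine tendsto_tsum_of_dominated_convergence
      (bound := fun n : ℕ => (‖(Complex.Gamma (ν + 1))⁻¹‖ + 1) * ((2 * ‖w‖) ^ n / n.factorial))
      ((Real.summable_pow_div_factorial _).mul_left _) (fun n => ?_) ?_
    · have : Continuous fun m : ℂ => besselCoeff m n * w ^ n := by
        have h1 : (fun m : ℂ => besselCoeff m n * w ^ n) = fun m : ℂ =>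
            ((-1 : ℂ) ^ n / Complex.Gamma (n + 1)) * (Complex.Gamma (n + m + 1))⁻¹ * w ^ n := by
          ext m; rw [besselCoeff, ← div_div, div_eq_mul_inv _ (Complex.Gamma (n + m + 1))]
        rw [h1]
        exact (continuous_const.mul (hG.comp (by fun_prop : Continuous fun m : ℂ =>
          (n : ℂ) + m + 1))).mul continuous_const
      exact this.tendsto ν
    · filter_upwards [(Complex.continuous_re.tendsto ν).eventually (lt_mem_nhds hν),
        (hG1.tendsto ν).eventually (gt_mem_nhds (lt_add_one _))] with m hm hm' n
      rw [norm_mul, norm_pow]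
      calc _ ≤ ‖(Complex.Gamma (m + 1))⁻¹‖ * (2 ^ n / n.factorial) * ‖w‖ ^ n := by
            gcongr; exact norm_besselCoeff_le hm.le n
        _ ≤ (‖(Complex.Gamma (ν + 1))⁻¹‖ + 1) * (2 ^ n / n.factorial) * ‖w‖ ^ n := by gcongr
        _ = _ := by rw [mul_pow]; ring
  have : (fun m : ℂ => besselJ m ξ) = fun m : ℂ =>
      ((ξ : ℂ) / 2) ^ m * besselEntire m ((ξ : ℂ) ^ 2 / 4) := by
    ext m; exact besselJ_eq m hξ
  rw [this]
  exact (continuousAt_const_cpow h0).mul hE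

lemma sin_pi_mul_order_ne_zero {ν : ℂ} (hν₁ : 0 < ν.re) (hν₂ : ν.re < 1 / 2) :
    Complex.sin (Real.pi * ν) ≠ 0 := by
  rw [Complex.sin_ne_zero_iff]
  intro k hk
  have hpi : (Real.pi : ℂ) ≠ 0 := by exact_mod_cast Real.pi_ne_zero
  have h : ν = k := mul_left_cancel₀ hpi (by rw [hk]; ring)
  rw [h, Complex.intCast_re] at hν₁ hν₂
  have h1 : 0 < k := by exact_mod_cast hν₁
  have h2 : (k : ℝ) < 1 := by linarith
  have h3 : k < 1 := by exact_mod_cast h2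
  omega

lemma besselY_eq {ν : ℂ} (hν₁ : 0 < ν.re) (hν₂ : ν.re < 1 / 2) {ξ : ℝ} (hξ : 0 < ξ) :
    besselY ν ξ = (besselJ ν ξ * Complex.cos (Real.pi * ν) - besselJ (-ν) ξ) /
      Complex.sin (Real.pi * ν) := by
  have hneg : -1 / 2 < (-ν).re := by rw [neg_re]; linarith
  have h1 := continuousAt_besselJ_order (ν := ν) (by linarith) hξ
  have h2 : ContinuousAt (fun m : ℂ => besselJ (-m) ξ) ν :=
    ContinuousAt.comp (f := fun m : ℂ => -m) (g := fun m : ℂ => besselJ m ξ)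
      (continuousAt_besselJ_order hneg hξ) continuous_neg.continuousAt
  have h3 : ContinuousAt (fun m : ℂ => (besselJ m ξ * Complex.cos (Real.pi * m) - besselJ (-m) ξ) /
      Complex.sin (Real.pi * m)) ν :=
    ((h1.mul (by fun_prop)).sub h2).div (by fun_prop) (sin_pi_mul_order_ne_zero hν₁ hν₂)
  exact (h3.tendsto.mono_left nhdsWithin_le_nhds).limUnder_eq

lemma weberC_eq {ν : ℂ} (hν₁ : 0 < ν.re) (hν₂ : ν.re < 1 / 2) {α β : ℝ} (hα : 0 < α)
    (hβ : 0 < β) :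
    weberC ν α β = (besselJ (-ν) α * besselJ ν β - besselJ ν α * besselJ (-ν) β) /
      Complex.sin (Real.pi * ν) := by
  rw [weberC, besselY_eq hν₁ hν₂ hα, besselY_eq hν₁ hν₂ hβ]
  ring

/-! ### Liouville normal form and Lommel's integral -/

/-- Solutions of `u'' = -(1 + k / t²) u` are bounded together with their derivative near `∞`:
the energy `|u|² + |u'|²` has derivative at most `|k| / t²` times itself, so
`(|u|² + |u'|²) * exp (|k| / t)` is nonincreasing. -/
lemma bounded_of_ode {u u' : ℝ → ℂ} {k : ℂ} {T : ℝ} (hT : 0 < T)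
    (h1 : ∀ t : ℝ, 0 < t → HasDerivAt u (u' t) t)
    (h2 : ∀ t : ℝ, 0 < t → HasDerivAt u' (-(1 + k / t ^ 2) * u t) t) :
    ∃ B : ℝ, ∀ t : ℝ, T ≤ t → ‖u t‖ ≤ B ∧ ‖u' t‖ ≤ B := by
  set Φ : ℝ → ℝ := fun t => (‖u t‖ ^ 2 + ‖u' t‖ ^ 2) * Real.exp (‖k‖ / t) with hΦ
  have hd : ∀ t : ℝ, 0 < t → ∃ d ≤ 0, HasDerivAt Φ d t := by
    intro t ht
    have hexp : HasDerivAt (fun t : ℝ => Real.exp (‖k‖ / t))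
        (Real.exp (‖k‖ / t) * (‖k‖ * (-(t ^ 2)⁻¹))) t := by
      simpa [div_eq_mul_inv] using ((hasDerivAt_inv ht.ne').const_mul ‖k‖).exp
    refine ⟨_, ?_, ((h1 t ht).norm_sq.add (h2 t ht).norm_sq).mul hexp⟩
    have e : inner ℝ (u' t) (-(1 + k / t ^ 2) * u t)
        = -inner ℝ (u t) (u' t) + inner ℝ (u' t) (-(k / t ^ 2) * u t) := by
      rw [show -(1 + k / (t : ℂ) ^ 2) * u t = -u t + -(k / t ^ 2) * u t by ring,
        inner_add_right, inner_neg_right, real_inner_comm]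
    have hle : inner ℝ (u' t) (-(k / t ^ 2) * u t) ≤ ‖u' t‖ * (‖k‖ * (t ^ 2)⁻¹ * ‖u t‖) := by
      refine (real_inner_le_norm _ _).trans_eq ?_
      rw [norm_mul, norm_neg, norm_div, norm_pow, Complex.norm_real, Real.norm_of_nonneg ht.le,
        div_eq_mul_inv]
    have hexp0 := Real.exp_pos (‖k‖ / t)
    have hk : 0 ≤ ‖k‖ * (t ^ 2)⁻¹ := by positivity
    have hmain : 2 * inner ℝ (u t) (u' t) + 2 * inner ℝ (u' t) (-(1 + k / t ^ 2) * u t)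
        - (‖u t‖ ^ 2 + ‖u' t‖ ^ 2) * (‖k‖ * (t ^ 2)⁻¹) ≤ 0 := by
      rw [e]
      nlinarith [mul_nonneg hk (sq_nonneg (‖u t‖ - ‖u' t‖))]
    calc _ = (2 * inner ℝ (u t) (u' t) + 2 * inner ℝ (u' t) (-(1 + k / t ^ 2) * u t)
        - (‖u t‖ ^ 2 + ‖u' t‖ ^ 2) * (‖k‖ * (t ^ 2)⁻¹)) * Real.exp (‖k‖ / t) := by
          simp only [Pi.add_apply]; ring
      _ ≤ 0 := mul_nonpos_of_nonpos_of_nonneg hmain hexp0.le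
  have hanti : AntitoneOn Φ (Set.Ici T) := by
    refine antitoneOn_of_deriv_nonpos (convex_Ici T) ?_ ?_ ?_
    · intro t ht
      obtain ⟨d, -, h⟩ := hd t (hT.trans_le ht)
      exact h.continuousAt.continuousWithinAt
    · intro t ht
      rw [interior_Ici] at ht
      obtain ⟨d, -, h⟩ := hd t (hT.trans ht)
      exact h.differentiableAt.differentiableWithinAt
    · intro t ht
      rw [interior_Ici] at ht
      obtain ⟨d, h0, h⟩ := hd t (hT.trans ht)
      rwa [h.deriv]
  refine ⟨√(Φ T), fun t ht => ?_⟩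
  have hle : ‖u t‖ ^ 2 + ‖u' t‖ ^ 2 ≤ Φ T := by
    refine le_trans ?_ (hanti Set.self_mem_Ici ht ht)
    have : 1 ≤ Real.exp (‖k‖ / t) := Real.one_le_exp (by have := hT.trans_le ht; positivity)
    exact le_mul_of_one_le_right (by positivity) this
  exact ⟨Real.le_sqrt_of_sq_le (by nlinarith [sq_nonneg ‖u' t‖]),
    Real.le_sqrt_of_sq_le (by nlinarith [sq_nonneg ‖u t‖])⟩

/-- The Liouville normal form `√t J_ν(t)` of the Bessel function. -/
noncomputable def besselU (ν : ℂ) (t : ℝ) : ℂ := (√t : ℂ) * besselJ ν t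

/-- The derivative of `besselU ν` on `(0, ∞)`. -/
noncomputable def besselU' (ν : ℂ) (t : ℝ) : ℂ :=
  (ν + 1 / 2) / t * besselU ν t - (√t : ℂ) * besselJ (ν + 1) t

lemma hasDerivAt_ofReal_sqrt {t : ℝ} (ht : 0 < t) :
    HasDerivAt (fun s : ℝ => (√s : ℂ)) (1 / (2 * t) * (√t : ℂ)) t := by
  refine (Real.hasDerivAt_sqrt ht.ne').ofReal_comp.congr_deriv ?_
  have h : (√t : ℂ) ≠ 0 := by exact_mod_cast (Real.sqrt_pos.2 ht).ne'
  have h2 : (√t : ℂ) * √t = t := by exact_mod_cast Real.mul_self_sqrt ht.le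
  rw [← h2]; push_cast; field_simp

lemma hasDerivAt_besselU {ν : ℂ} (hν : -1 / 2 ≤ ν.re) {t : ℝ} (ht : 0 < t) :
    HasDerivAt (besselU ν) (besselU' ν t) t := by
  refine ((hasDerivAt_ofReal_sqrt ht).mul (hasDerivAt_besselJ hν ht)).congr_deriv ?_
  have ht0 : (t : ℂ) ≠ 0 := by exact_mod_cast ht.ne'
  rw [besselU', besselU]
  field_simp
  ring

lemma hasDerivAt_besselU' {ν : ℂ} (hν : -1 / 2 ≤ ν.re) {t : ℝ} (ht : 0 < t) :
    HasDerivAt (besselU' ν) (-(1 + (1 / 4 - ν ^ 2) / t ^ 2) * besselU ν t) t := by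
  have ht0 : (t : ℂ) ≠ 0 := by exact_mod_cast ht.ne'
  have hinv : HasDerivAt (fun s : ℝ => (ν + 1 / 2) / (s : ℂ)) ((ν + 1 / 2) * (-(t ^ 2 : ℂ)⁻¹)) t := by
    simpa [div_eq_mul_inv] using ((hasDerivAt_inv ht0).comp_ofReal).const_mul (ν + 1 / 2)
  refine ((hinv.mul (hasDerivAt_besselU hν ht)).sub
    ((hasDerivAt_ofReal_sqrt ht).mul (hasDerivAt_besselJ_succ hν ht))).congr_deriv ?_
  rw [besselU', besselU]
  field_simp
  ring

lemma hasDerivAt_comp_mul {f : ℝ → ℂ} {f' : ℂ} {c ξ : ℝ} (h : HasDerivAt f f' (c * ξ)) :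
    HasDerivAt (fun t : ℝ => f (c * t)) (c * f') ξ := by
  have := h.scomp ξ ((hasDerivAt_id ξ).const_mul c)
  exact this.congr_deriv (by simp)

/-- Lommel's integral: up to a constant factor, `ξ C_ν(xξ, aξ)` is the derivative of the
Wronskian-type expression `(d/dξ u(xξ)) v(aξ) - u(xξ) (d/dξ v(aξ))`, antisymmetrized in `u` and `v`,
where `u = besselU ν` and `v = besselU (-ν)`; this expression is bounded on `[1, ∞)`. -/
lemma exists_bounded_primitive {x a : ℝ} {ν : ℂ} (ha : 0 < a) (hax : a < x) (hν₁ : 0 < ν.re)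
    (hν₂ : ν.re < 1 / 2) :
    ∃ G G' : ℝ → ℂ, ∃ B : ℝ, (∀ ξ : ℝ, 1 ≤ ξ → HasDerivAt G (G' ξ) ξ) ∧
      ContinuousOn G' (Set.Ici 1) ∧ (∀ ξ : ℝ, 1 ≤ ξ → ‖G ξ‖ ≤ B) ∧
      ∀ ξ : ℝ, 1 ≤ ξ → weberC ν ((x * ξ : ℝ) : ℂ) ((a * ξ : ℝ) : ℂ) = G' ξ / ξ := by
  have hx : 0 < x := ha.trans hax
  have hp : -1 / 2 ≤ ν.re := by linarith
  have hm : -1 / 2 ≤ (-ν).re := by rw [neg_re]; linarith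
  have hd2m : ∀ t : ℝ, 0 < t → HasDerivAt (besselU' (-ν))
      (-(1 + (1 / 4 - ν ^ 2) / t ^ 2) * besselU (-ν) t) t := fun t ht => by
    simpa only [neg_sq] using hasDerivAt_besselU' hm ht
  obtain ⟨B₁, hB₁⟩ := bounded_of_ode ha (fun t ht => hasDerivAt_besselU hp ht)
    (fun t ht => hasDerivAt_besselU' hp ht)
  obtain ⟨B₂, hB₂⟩ := bounded_of_ode ha (fun t ht => hasDerivAt_besselU hm ht) hd2m
  set D : ℂ := (x ^ 2 - a ^ 2) * Complex.sin (Real.pi * ν) * (√x * √a) with hD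
  have hsin := sin_pi_mul_order_ne_zero hν₁ hν₂
  have hxa : (x : ℂ) ^ 2 - a ^ 2 ≠ 0 := by
    have : x ^ 2 - a ^ 2 ≠ 0 := by nlinarith
    exact_mod_cast this
  have hsx : (√x : ℂ) ≠ 0 := by exact_mod_cast (Real.sqrt_pos.2 hx).ne'
  have hsa : (√a : ℂ) ≠ 0 := by exact_mod_cast (Real.sqrt_pos.2 ha).ne'
  set u := besselU ν
  set u' := besselU' ν
  set v := besselU (-ν)
  set v' := besselU' (-ν)
  have du : ∀ c : ℝ, 0 < c → ∀ ξ : ℝ, 0 < ξ → HasDerivAt (fun t : ℝ => u (c * t))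
      (c * u' (c * ξ)) ξ := fun c hc ξ hξ =>
    hasDerivAt_comp_mul (hasDerivAt_besselU hp (mul_pos hc hξ))
  have dv : ∀ c : ℝ, 0 < c → ∀ ξ : ℝ, 0 < ξ → HasDerivAt (fun t : ℝ => v (c * t))
      (c * v' (c * ξ)) ξ := fun c hc ξ hξ =>
    hasDerivAt_comp_mul (hasDerivAt_besselU hm (mul_pos hc hξ))
  have du' : ∀ c : ℝ, 0 < c → ∀ ξ : ℝ, 0 < ξ → HasDerivAt (fun t : ℝ => u' (c * t))
      (c * (-(1 + (1 / 4 - ν ^ 2) / (c * ξ : ℝ) ^ 2) * u (c * ξ))) ξ := fun c hc ξ hξ =>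
    hasDerivAt_comp_mul (hasDerivAt_besselU' hp (mul_pos hc hξ))
  have dv' : ∀ c : ℝ, 0 < c → ∀ ξ : ℝ, 0 < ξ → HasDerivAt (fun t : ℝ => v' (c * t))
      (c * (-(1 + (1 / 4 - ν ^ 2) / (c * ξ : ℝ) ^ 2) * v (c * ξ))) ξ := fun c hc ξ hξ =>
    hasDerivAt_comp_mul (hd2m _ (mul_pos hc hξ))
  refine ⟨fun ξ => (x * (u' (x * ξ) * v (a * ξ) - v' (x * ξ) * u (a * ξ))
      - a * (u (x * ξ) * v' (a * ξ) - v (x * ξ) * u' (a * ξ))) / D,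
    fun ξ => ((a ^ 2 - x ^ 2) * (u (x * ξ) * v (a * ξ) - v (x * ξ) * u (a * ξ))) / D,
    (x * (B₁ * B₂ + B₂ * B₁) + a * (B₁ * B₂ + B₂ * B₁)) / ‖D‖, ?_, ?_, ?_, ?_⟩
  · intro ξ hξ1
    have hξ : 0 < ξ := by linarith
    have hξ0 : (ξ : ℂ) ≠ 0 := by exact_mod_cast hξ.ne'
    have hx0 : (x : ℂ) ≠ 0 := by exact_mod_cast hx.ne'
    have ha0 : (a : ℂ) ≠ 0 := by exact_mod_cast ha.ne'
    refine (((((du' x hx ξ hξ).mul (dv a ha ξ hξ)).sub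
      ((dv' x hx ξ hξ).mul (du a ha ξ hξ))).const_mul (x : ℂ)).sub
      ((((du x hx ξ hξ).mul (dv' a ha ξ hξ)).sub
      ((dv x hx ξ hξ).mul (du' a ha ξ hξ))).const_mul (a : ℂ))).div_const D |>.congr_deriv ?_
    congr 1
    push_cast
    field_simp
    ring
  · intro ξ hξ1
    have hξ : 0 < ξ := lt_of_lt_of_le one_pos hξ1
    have h1 := (du x hx ξ hξ).continuousAt
    have h2 := (dv x hx ξ hξ).continuousAt
    have h3 := (du a ha ξ hξ).continuousAt
    have h4 := (dv a ha ξ hξ).continuousAt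
    exact ((continuousAt_const.mul ((h1.mul h4).sub (h2.mul h3))).div_const D).continuousWithinAt
  · intro ξ hξ1
    have hxξ : a ≤ x * ξ := by nlinarith
    have haξ : a ≤ a * ξ := by nlinarith
    obtain ⟨p1, p2⟩ := hB₁ _ hxξ
    obtain ⟨p3, p4⟩ := hB₁ _ haξ
    obtain ⟨q1, q2⟩ := hB₂ _ hxξ
    obtain ⟨q3, q4⟩ := hB₂ _ haξ
    have hB₁0 : 0 ≤ B₁ := (norm_nonneg _).trans p1
    have hB₂0 : 0 ≤ B₂ := (norm_nonneg _).trans q1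
    have hmul : ∀ {z w : ℂ} {b c : ℝ}, 0 ≤ b → ‖z‖ ≤ b → ‖w‖ ≤ c → ‖z * w‖ ≤ b * c := by
      intro z w b c hb hz hw
      rw [norm_mul]; exact mul_le_mul hz hw (norm_nonneg _) hb
    have hcx : ‖(x : ℂ)‖ ≤ x := by rw [Complex.norm_real, Real.norm_of_nonneg hx.le]
    have hca : ‖(a : ℂ)‖ ≤ a := by rw [Complex.norm_real, Real.norm_of_nonneg ha.le]
    rw [norm_div]
    gcongr
    exact norm_sub_le_of_le (hmul hx.le hcx (norm_sub_le_of_le (hmul hB₁0 p2 q3) (hmul hB₂0 q2 p3)))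
      (hmul ha.le hca (norm_sub_le_of_le (hmul hB₁0 p1 q4) (hmul hB₂0 q1 p4)))
  · intro ξ hξ1
    have hξ : 0 < ξ := by linarith
    have hξ0 : (ξ : ℂ) ≠ 0 := by exact_mod_cast hξ.ne'
    have hsξ : (√ξ : ℂ) * √ξ = ξ := by exact_mod_cast Real.mul_self_sqrt hξ.le
    have hsξ0 : (√ξ : ℂ) ≠ 0 := by exact_mod_cast (Real.sqrt_pos.2 hξ).ne'
    rw [weberC_eq hν₁ hν₂ (mul_pos hx hξ) (mul_pos ha hξ)]
    simp only [u, v, besselU]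
    rw [Real.sqrt_mul hx.le, Real.sqrt_mul ha.le, hD]
    rw [← hsξ]
    push_cast
    field_simp
    ring

/-! ### The tail estimate -/

/-- Integration by parts in `∫_N^M (G'(ξ) / ξ) ξ ^ (-s) dξ` with `G` bounded and `Re s > -1`: the
improper integral converges and is `O((1 + |1 + s|) N ^ (-1 - Re s))`. -/
lemma norm_limUnder_le {F G G' : ℝ → ℂ} {B : ℝ}
    (hG : ∀ ξ : ℝ, 1 ≤ ξ → HasDerivAt G (G' ξ) ξ) (hG' : ContinuousOn G' (Set.Ici 1))
    (hB : ∀ ξ : ℝ, 1 ≤ ξ → ‖G ξ‖ ≤ B) (hF : ∀ ξ : ℝ, 1 ≤ ξ → F ξ = G' ξ / ξ)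
    {s : ℂ} (hs : -1 < s.re) {N : ℝ} (hN : 1 ≤ N) :
    ‖limUnder atTop (fun M : ℝ => ∫ ξ in N..M, F ξ * (ξ : ℂ) ^ (-s))‖ ≤
      B * N ^ (-1 - s.re) * (1 + ‖1 + s‖ / (1 + s.re)) := by
  have hB0 : 0 ≤ B := (norm_nonneg _).trans (hB 1 le_rfl)
  have hN0 : 0 < N := by linarith
  have hdp : ∀ ξ : ℝ, 1 ≤ ξ → HasDerivAt (fun t : ℝ => (t : ℂ) ^ (-1 - s))
      ((-1 - s) * (ξ : ℂ) ^ (-2 - s)) ξ := by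
    intro ξ hξ
    have hmem : (ξ : ℂ) ∈ Complex.slitPlane := Complex.ofReal_mem_slitPlane.2 (by linarith)
    have h := ((hasDerivAt_id (ξ : ℂ)).cpow_const (c := -1 - s) hmem).comp_ofReal
    refine h.congr_deriv ?_
    rw [show -1 - s - 1 = -2 - s by ring, mul_one]; rfl
  have hcont2 : ContinuousOn (fun t : ℝ => (t : ℂ) ^ (-2 - s)) (Set.Ici 1) := by
    intro t ht
    exact (Complex.continuousAt_ofReal_cpow_const t _
      (Or.inr (zero_lt_one.trans_le ht).ne')).continuousWithinAt
  have hcontG : ContinuousOn G (Set.Ici 1) := fun t ht => (hG t ht).continuousAt.continuousWithinAt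
  have hnorm : ∀ (c : ℂ) (ξ : ℝ), 1 ≤ ξ → ‖(ξ : ℂ) ^ c‖ = ξ ^ c.re := fun c ξ hξ =>
    Complex.norm_cpow_eq_rpow_re_of_pos (by linarith) c
  have hre2 : (-2 - s).re = -2 - s.re := by simp
  have hre1 : (-1 - s).re = -1 - s.re := by simp
  have hbd : ∀ ξ : ℝ, 1 ≤ ξ → ‖G ξ * ((-1 - s) * (ξ : ℂ) ^ (-2 - s))‖ ≤
      B * ‖1 + s‖ * ξ ^ (-2 - s.re) := by
    intro ξ hξ
    rw [norm_mul, norm_mul, hnorm _ _ hξ, hre2, show -1 - s = -(1 + s) by ring, norm_neg,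
      ← mul_assoc]
    have : 0 ≤ ξ ^ (-2 - s.re) := Real.rpow_nonneg (by linarith) _
    gcongr
    exact hB ξ hξ
  have hrpow : IntegrableOn (fun ξ : ℝ => B * ‖1 + s‖ * ξ ^ (-2 - s.re)) (Set.Ioi N) :=
    (integrableOn_Ioi_rpow_of_lt (by linarith) hN0).const_mul _
  have hsub : Set.Ioi N ⊆ Set.Ici 1 := fun t ht => hN.trans (le_of_lt ht)
  have hint : IntegrableOn (fun ξ : ℝ => G ξ * ((-1 - s) * (ξ : ℂ) ^ (-2 - s))) (Set.Ioi N) := by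
    refine Integrable.mono' hrpow ?_ ?_
    · exact ((hcontG.mul (continuousOn_const.mul hcont2)).mono hsub).aestronglyMeasurable
        measurableSet_Ioi
    · filter_upwards [ae_restrict_mem measurableSet_Ioi] with ξ hξ
      exact hbd ξ (hsub hξ)
  set L : ℂ := ∫ ξ in Set.Ioi N, G ξ * ((-1 - s) * (ξ : ℂ) ^ (-2 - s)) with hL
  have hparts : ∀ M : ℝ, N ≤ M → ∫ ξ in N..M, F ξ * (ξ : ℂ) ^ (-s) =
      G M * (M : ℂ) ^ (-1 - s) - G N * (N : ℂ) ^ (-1 - s)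
        - ∫ ξ in N..M, G ξ * ((-1 - s) * (ξ : ℂ) ^ (-2 - s)) := by
    intro M hM
    have hsub' : Set.uIcc N M ⊆ Set.Ici 1 := by
      rw [Set.uIcc_of_le hM]; exact fun t ht => hN.trans ht.1
    have h := intervalIntegral.integral_mul_deriv_eq_deriv_mul
      (fun t ht => hdp t (hsub' ht)) (fun t ht => hG t (hsub' ht))
      ((continuousOn_const.mul hcont2).mono hsub').intervalIntegrable
      (hG'.mono hsub').intervalIntegrable
    rw [mul_comm (G M), mul_comm (G N)]
    simp only [mul_comm (G _)]
    rw [← h]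
    refine intervalIntegral.integral_congr fun ξ hξ => ?_
    have hξ0 : (ξ : ℂ) ≠ 0 := by
      exact_mod_cast (zero_lt_one.trans_le (hsub' hξ)).ne'
    change F ξ * (ξ : ℂ) ^ (-s) = (ξ : ℂ) ^ (-1 - s) * G' ξ
    rw [hF ξ (hsub' hξ), sub_eq_add_neg, Complex.cpow_add _ _ hξ0, Complex.cpow_neg_one]
    ring
  have hlim : Tendsto (fun M : ℝ => ∫ ξ in N..M, F ξ * (ξ : ℂ) ^ (-s)) atTop
      (𝓝 (0 - G N * (N : ℂ) ^ (-1 - s) - L)) := by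
    have h0 : Tendsto (fun M : ℝ => G M * (M : ℂ) ^ (-1 - s)) atTop (𝓝 0) := by
      have hz : Tendsto (fun M : ℝ => B * M ^ (-(1 + s.re))) atTop (𝓝 0) := by
        simpa using (tendsto_rpow_neg_atTop (by linarith : 0 < 1 + s.re)).const_mul B
      refine squeeze_zero_norm' ?_ hz
      filter_upwards [eventually_ge_atTop 1] with M hM
      rw [norm_mul, hnorm _ _ hM, hre1, show -1 - s.re = -(1 + s.re) by ring]
      have : 0 ≤ M ^ (-(1 + s.re)) := Real.rpow_nonneg (by linarith) _
      gcongr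
      exact hB M hM
    refine ((h0.sub_const _).sub
      (intervalIntegral_tendsto_integral_Ioi N hint tendsto_id)).congr' ?_
    filter_upwards [eventually_ge_atTop N] with M hM
    exact (hparts M hM).symm
  rw [hlim.limUnder_eq]
  have h1 : ‖G N * (N : ℂ) ^ (-1 - s)‖ ≤ B * N ^ (-1 - s.re) := by
    rw [norm_mul, hnorm _ _ hN, hre1]
    gcongr
    exact hB N hN
  have h2 : ‖L‖ ≤ B * ‖1 + s‖ * (N ^ (-1 - s.re) / (1 + s.re)) := by
    refine (MeasureTheory.norm_integral_le_of_norm_le hrpow ?_).trans_eq ?_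
    · filter_upwards [ae_restrict_mem measurableSet_Ioi] with ξ hξ
      exact hbd ξ (hsub hξ)
    · rw [MeasureTheory.integral_const_mul, integral_Ioi_rpow_of_lt (by linarith) hN0,
        show -2 - s.re + 1 = -(1 + s.re) by ring, show -1 - s.re = -(1 + s.re) by ring, neg_div_neg_eq]
  calc _ = ‖G N * (N : ℂ) ^ (-1 - s) + L‖ := by rw [← norm_neg]; congr 1; ring
    _ ≤ B * N ^ (-1 - s.re) + B * ‖1 + s‖ * (N ^ (-1 - s.re) / (1 + s.re)) := norm_add_le_of_le h1 h2
    _ = _ := by ring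

/-- For fixed `x > a > 0`, `0 < Re ν < 1/2`, `-1 < μ < 0` and `gs` with `s ↦ s gs(s)`
integrable on the line `Re s = μ`,
`lim_{N→∞} ∫_{μ-i∞}^{μ+i∞} gs(s) ∫_N^∞ C_ν(xξ, aξ) ξ^{-s} dξ ds = 0`,
the inner integral over `[N, ∞)` being understood in the improper sense. -/
theorem tail_double_integral_tendsto_zero (x a μ : ℝ) (ν : ℂ) (gs : ℂ → ℂ)
    (ha : 0 < a) (hax : a < x) (hν₁ : 0 < ν.re) (hν₂ : ν.re < 1 / 2)
    (hμ₁ : -1 < μ) (hμ₂ : μ < 0)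
    (hgs : Integrable fun τ : ℝ => ((μ : ℂ) + τ * Complex.I) * gs ((μ : ℂ) + τ * Complex.I)) :
    Tendsto (fun N : ℝ =>
        Complex.I * ∫ τ : ℝ, gs ((μ : ℂ) + τ * Complex.I) *
          limUnder atTop (fun M : ℝ =>
            ∫ ξ in N..M, weberC ν ((x * ξ : ℝ) : ℂ) ((a * ξ : ℝ) : ℂ) *
              (ξ : ℂ) ^ (-((μ : ℂ) + τ * Complex.I))))
      atTop (𝓝 0) := by
  obtain ⟨G, G', B, hG, hG', hB, hF⟩ := exists_bounded_primitive ha hax hν₁ hν₂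
  have hB0 : 0 ≤ B := (norm_nonneg _).trans (hB 1 le_rfl)
  have hμ1 : 0 < 1 + μ := by linarith
  have hμ0 : 0 < -μ := by linarith
  -- `|Re s| = -μ` is bounded away from `0`, so `1 + |1 + s| / (1 + μ) ≤ K * |s|` on the line.
  set K : ℝ := 1 / (-μ) + (1 / (-μ) + 1) / (1 + μ) with hK
  set I₀ : ℝ := ∫ τ : ℝ, ‖((μ : ℂ) + τ * Complex.I) * gs ((μ : ℂ) + τ * Complex.I)‖
  have hz : Tendsto (fun N : ℝ => B * N ^ (-(1 + μ)) * K * I₀) atTop (𝓝 0) := by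
    simpa using (((tendsto_rpow_neg_atTop hμ1).const_mul B).mul_const K).mul_const I₀
  refine squeeze_zero_norm' ?_ hz
  filter_upwards [eventually_ge_atTop 1] with N hN
  rw [norm_mul, Complex.norm_I, one_mul, ← MeasureTheory.integral_const_mul]
  refine MeasureTheory.norm_integral_le_of_norm_le (hgs.norm.const_mul _) (Eventually.of_forall fun τ => ?_)
  set s : ℂ := (μ : ℂ) + τ * Complex.I with hs
  have hre : s.re = μ := by simp [hs]
  have h1 := norm_limUnder_le hG hG' hB hF (s := s) (by rw [hre]; exact hμ₁) hN
  rw [hre, show -1 - μ = -(1 + μ) by ring] at h1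
  have hsn : -μ ≤ ‖s‖ := by
    have := Complex.abs_re_le_norm s
    rw [hre, abs_of_neg hμ₂] at this
    exact this
  have h2 : 1 ≤ 1 / (-μ) * ‖s‖ := by
    rw [one_div_mul_eq_div, le_div_iff₀ hμ0]; linarith
  have h3 : ‖1 + s‖ ≤ (1 / (-μ) + 1) * ‖s‖ := by
    have := norm_add_le 1 s
    rw [norm_one] at this
    linarith
  have h4 : 1 + ‖1 + s‖ / (1 + μ) ≤ K * ‖s‖ := by
    calc 1 + ‖1 + s‖ / (1 + μ) ≤ 1 / (-μ) * ‖s‖ + (1 / (-μ) + 1) * ‖s‖ / (1 + μ) := by gcongr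
      _ = K * ‖s‖ := by rw [hK]; ring
  have hN' : 0 ≤ N ^ (-(1 + μ)) := Real.rpow_nonneg (by linarith) _
  rw [norm_mul, norm_mul]
  calc _ ≤ ‖gs s‖ * (B * N ^ (-(1 + μ)) * (K * ‖s‖)) := by
        gcongr
        exact h1.trans (by gcongr)
    _ = _ := by ring
end

section
/- Let $\nu, s, w \in \mathbb{C}$ with $0 < \mathrm{Re}\,\nu < 1/2$, $-1 < \mathrm{Re}\,s < 0$, $-1 < \mathrm{Re}\,w < -1/2$, and let $\gamma$ satisfy $\frac{1}{2}(1 + \mathrm{Re}(s + \nu)) < \gamma < \frac{1}{2}(1 + \mathrm{Re}(w - \nu))$. Then $\dfrac{1}{2\pi i} \int_{\gamma - i\infty}^{\gamma + i\infty} \dfrac{\Gamma(\frac{\nu + w + 1}{2} - \tau)\, \Gamma(\frac{w + 1 - \nu}{2} - \tau)\, \Gamma(\frac{\nu - s - 1}{2} + \tau)\, \Gamma(\tau - \frac{1 + s + \nu}{2})}{\Gamma(1 + \frac{\nu}{2} - \tau)\, \Gamma(1 - \frac{\nu}{2} - \tau)\, \Gamma(\tau + \frac{\nu}{2})\, \Gamma(\tau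 - \frac{\nu}{2})}\, d\tau = 2^{s - w + 1}\, \dfrac{\cos(\pi\nu)}{\sqrt{\pi}}\, \dfrac{\Gamma(\frac{1 + s - w}{2})\, \Gamma(\frac{w - s}{2})\, \Gamma(\frac{w - s}{2} - \nu)\, \Gamma(\frac{w - s}{2} + \nu)}{\Gamma(\frac{1 + s}{2})\, \Gamma(\frac{1 - s}{2})\, \Gamma(\frac{1 + w}{2})\, \Gamma(\frac{1 - w}{2})}$. -/
/-!
Write `τ = γ + iy`, `x = (w - s) / 2`, and `a₁ = (ν + w + 1) / 2 - γ`, `a₂ = (w + 1 - ν) / 2 - γ`,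
`b₁ = (ν - s - 1) / 2 + γ`, `b₂ = γ - (1 + s + ν) / 2`, all of positive real part. The reflection
formula turns the four Gamma factors in the denominator into sines, so the integrand is
`G · sin π(τ + ν/2) · sin π(τ - ν/2) / π²` with
`G = Γ(a₁ - iy) Γ(a₂ - iy) Γ(b₁ + iy) Γ(b₂ + iy)`.

After multiplication by `sin π(w - s)`, this product of sines is a combination of the constant `1`,
of `sin π(b₁ + iy) · sin π(b₂ + iy)` and of `sin π(a₁ - iy) · sin π(a₂ - iy)`
(`sin_mul_sin_decomposition`). The constant contributes a multiple of `∫ G`, which is Barnes' first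
lemma (`barnes_first`). The other two terms, by reflection again, are products of two quotients
`Γ(a - iy) / Γ(a - iy + c)` with `c = 1 - x`, and their integrals vanish (`vanishing`).
The duplication and reflection formulas then bring the value into the stated shape
(`gamma_quotient_eval`).

Both integrals follow from Parseval's formula `parseval`. By Euler's Beta integral,
`Γ(a - iy) Γ(b + iy) / Γ(a + b)` is the Fourier transform of `σ(-u) ^ a * σ(u) ^ b`, with `σ` the
sigmoid function, and `Γ(a - iy) Γ(c) / Γ(a - iy + c)` is that of
`exp (-a u) * (1 - exp (-u)) ^ (c - 1)` on `u > 0`. Parseval pairs `f u` with `g (-u)`: densities of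
the first kind multiply to another one of the same kind, while densities of the second kind have
disjoint supports, whence the zero. The latter are square integrable exactly when `1 / 2 < re c`,
which holds here since `re x < 1 / 2`. Parseval for functions in `L¹ ∩ L²` is Plancherel's theorem
on `L²` combined with `fourier_toLp_ae_eq`.
-/

open MeasureTheory Filter Set Topology Complex intervalIntegral

open scoped FourierTransform ComplexInnerProductSpace SchwartzMap ENNReal

/-! ### Parseval's formula for functions in `L¹ ∩ L²` -/

/-- The Fourier transform on `L²`, defined by extension from Schwartz functions, agrees almost
everywhere with the Fourier integral on `L¹ ∩ L²`: both define the same tempered distribution. -/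
theorem fourier_toLp_ae_eq {f : ℝ → ℂ} (hf : Integrable f) (hf2 : MemLp f 2) :
    ((𝓕 (hf2.toLp f) : Lp ℂ 2 (volume : Measure ℝ)) : ℝ → ℂ) =ᵐ[volume] 𝓕 f := by
  have hcont : Continuous (𝓕 f) :=
    VectorFourier.fourierIntegral_continuous Real.continuous_fourierChar continuous_inner hf
  -- Test both sides against smooth compactly supported functions, viewed as Schwartz functions.
  refine ae_eq_of_integral_contDiff_smul_eq
    ((Lp.memLp (𝓕 (hf2.toLp f))).locallyIntegrable (by norm_num)) hcont.locallyIntegrable ?_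
  intro g hg hgs
  have hgs' : HasCompactSupport (fun x ↦ (g x : ℂ)) := hgs.comp_left (g := fun x : ℝ ↦ (x : ℂ)) rfl
  set φ : 𝓢(ℝ, ℂ) := hgs'.toSchwartzMap (Complex.ofRealCLM.contDiff.comp hg) with hφ
  have hφg : ∀ x, φ x = (g x : ℂ) := fun x ↦ rfl
  have h1 : ∫ x, g x • (𝓕 (hf2.toLp f) : Lp ℂ 2 (volume : Measure ℝ)) x
      = ∫ x, φ x • (𝓕 (hf2.toLp f) : Lp ℂ 2 (volume : Measure ℝ)) x := by
    simp [hφg]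
  have h2 : ∫ x, g x • 𝓕 f x = ∫ x, φ x • 𝓕 f x := by
    simp [hφg]
  rw [h1, h2, ← Lp.toTemperedDistribution_apply, ← Lp.fourier_toTemperedDistribution_eq,
    TemperedDistribution.fourier_apply, Lp.toTemperedDistribution_apply]
  have h3 : ∫ x, (𝓕 φ) x • hf2.toLp f x = ∫ x, (𝓕 φ) x • f x := by
    refine integral_congr_ae ?_
    filter_upwards [hf2.coeFn_toLp] with x hx
    rw [hx]
  rw [h3]
  have := VectorFourier.integral_fourierIntegral_smul_eq_flip (L := innerₗ ℝ) (μ := volume)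
    (ν := volume) Real.continuous_fourierChar continuous_inner φ.integrable hf
  rw [flip_innerₗ] at this
  exact this

/-- Parseval's formula in bilinear form, obtained from the sesquilinear one by replacing `f` with
`u ↦ conj (f (-u))`. -/
theorem integral_fourier_mul_fourier {f g : ℝ → ℂ} (hf : Integrable f) (hf2 : MemLp f 2)
    (hg : Integrable g) (hg2 : MemLp g 2) :
    Integrable (fun ξ ↦ 𝓕 f ξ * 𝓕 g ξ) ∧ ∫ ξ, 𝓕 f ξ * 𝓕 g ξ = ∫ u, f u * g (-u) := by
  set f' : ℝ → ℂ := fun u ↦ starRingEnd ℂ (f (-u)) with hf'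
  have hfneg2 : MemLp (fun u ↦ f (-u)) 2 :=
    hf2.comp_measurePreserving (Measure.measurePreserving_neg volume)
  have hf'i : Integrable f' := (Complex.conjCLE.integrable_comp_iff (φ := fun u ↦ f (-u))).2 hf.comp_neg
  have hf'2 : MemLp f' 2 := hfneg2.star
  have hconj : ∀ ξ, 𝓕 f ξ = starRingEnd ℂ (𝓕 f' ξ) := by
    intro ξ
    rw [Real.fourier_real_eq_integral_exp_smul, Real.fourier_real_eq_integral_exp_smul,
      ← integral_conj, ← integral_neg_eq_self]
    congr 1; ext u
    simp [hf', ← Complex.exp_conj, map_ofNat (starRingEnd ℂ) 2]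
  have hF := fourier_toLp_ae_eq hf'i hf'2
  have hG := fourier_toLp_ae_eq hg hg2
  have hae : (fun ξ ↦ ⟪(𝓕 (hf'2.toLp f') : Lp ℂ 2 (volume : Measure ℝ)) ξ,
      (𝓕 (hg2.toLp g) : Lp ℂ 2 (volume : Measure ℝ)) ξ⟫) =ᵐ[volume] fun ξ ↦ 𝓕 f ξ * 𝓕 g ξ := by
    filter_upwards [hF, hG] with ξ h1 h2
    rw [h1, h2, hconj, RCLike.inner_apply, mul_comm]
  refine ⟨(L2.integrable_inner _ _).congr hae, ?_⟩
  rw [← integral_congr_ae hae, ← L2.inner_def, Lp.inner_fourier_eq, L2.inner_def]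
  rw [← integral_neg_eq_self (fun u ↦ f u * g (-u))]
  refine integral_congr_ae ?_
  filter_upwards [hf'2.coeFn_toLp, hg2.coeFn_toLp] with u h1 h2
  rw [h1, h2, RCLike.inner_apply]
  simp [hf', mul_comm]

/-- Parseval's formula for Fourier transforms normalised with kernel `exp (i u y)`, in place of
the kernel `exp (-2 π i u ξ)` of `𝓕`. -/
theorem parseval {f g F G : ℝ → ℂ} (hf : Integrable f) (hf2 : MemLp f 2)
    (hg : Integrable g) (hg2 : MemLp g 2)
    (hF : ∀ y : ℝ, F y = ∫ u : ℝ, cexp (I * u * y) * f u)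
    (hG : ∀ y : ℝ, G y = ∫ u : ℝ, cexp (I * u * y) * g u) :
    Integrable (fun y ↦ F y * G y) ∧ ∫ y, F y * G y = 2 * Real.pi * ∫ u, f u * g (-u) := by
  obtain ⟨hi, he⟩ := integral_fourier_mul_fourier hf hf2 hg hg2
  have key : ∀ (h H : ℝ → ℂ), (∀ y : ℝ, H y = ∫ u : ℝ, cexp (I * u * y) * h u) →
      ∀ y, H y = 𝓕 h ((-(2 * Real.pi))⁻¹ * y) := by
    intro h H hH y
    rw [hH, Real.fourier_real_eq_integral_exp_smul]
    congr 1; ext u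
    rw [smul_eq_mul]
    congr 2
    push_cast
    field_simp
  have h0 : (-(2 * Real.pi))⁻¹ ≠ 0 := by simp [Real.pi_ne_zero]
  have hfun : (fun y ↦ F y * G y) =
      fun y ↦ (fun ξ ↦ 𝓕 f ξ * 𝓕 g ξ) ((-(2 * Real.pi))⁻¹ * y) := by
    ext y; simp only [key f F hF, key g G hG]
  rw [hfun]
  refine ⟨hi.comp_mul_left' h0, ?_⟩
  rw [Measure.integral_comp_mul_left (fun ξ ↦ 𝓕 f ξ * 𝓕 g ξ), he, inv_inv, abs_neg, abs_of_pos Real.two_pi_pos,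
    Complex.real_smul]
  push_cast
  ring

/-! ### Two families of densities with Beta-type Fourier transforms -/

theorem betaIntegrand_integrableOn {a b : ℂ} (ha : 0 < a.re) (hb : 0 < b.re) :
    IntegrableOn (fun x : ℝ ↦ (x : ℂ) ^ (a - 1) * (1 - (x : ℂ)) ^ (b - 1)) (Ioo 0 1) :=
  ((intervalIntegrable_iff_integrableOn_Ioc_of_le zero_le_one).1
    (Complex.betaIntegral_convergent ha hb)).mono_set Ioo_subset_Ioc_self

theorem integral_betaIntegrand {a b : ℂ} (ha : 0 < a.re) (hb : 0 < b.re) :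
    ∫ x in Ioo (0 : ℝ) 1, (x : ℂ) ^ (a - 1) * (1 - (x : ℂ)) ^ (b - 1) =
      Gamma a * Gamma b / Gamma (a + b) := by
  rw [← Complex.betaIntegral_eq_Gamma_mul_div a b ha hb, Complex.betaIntegral,
    intervalIntegral.integral_of_le zero_le_one, integral_Ioc_eq_integral_Ioo]

/-- The function `u ↦ σ(-u) ^ a * σ(u) ^ b` on `ℝ`, with `σ(u) = 1 / (1 + exp (-u))`: the
unnormalised density of the generalised logistic distribution, with complex parameters. It is the
pull-back of the Beta density under `t = σ(u)`. -/
noncomputable def logisticDensity (a b : ℂ) (u : ℝ) : ℂ :=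
  (Real.sigmoid (-u) : ℂ) ^ a * (Real.sigmoid u : ℂ) ^ b

/-- The density as Jacobian of `σ` times the Beta integrand at `σ(u)`. -/
theorem logisticDensity_eq (a b : ℂ) (u : ℝ) : logisticDensity a b u =
    |Real.sigmoid u * (1 - Real.sigmoid u)| •
      ((Real.sigmoid u : ℂ) ^ (b - 1) * (1 - (Real.sigmoid u : ℂ)) ^ (a - 1)) := by
  have h0 := Real.sigmoid_pos u
  have h1 : 0 < 1 - Real.sigmoid u := sub_pos.2 (Real.sigmoid_lt_one u)
  have h0' : (Real.sigmoid u : ℂ) ≠ 0 := by exact_mod_cast h0.ne'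
  have h1' : (1 - Real.sigmoid u : ℂ) ≠ 0 := by exact_mod_cast h1.ne'
  rw [logisticDensity, Real.sigmoid_neg, abs_of_pos (mul_pos h0 h1), Complex.real_smul]
  push_cast
  rw [Complex.cpow_sub _ _ h0', Complex.cpow_sub _ _ h1', Complex.cpow_one, Complex.cpow_one]
  field_simp

theorem integrable_logisticDensity {a b : ℂ} (ha : 0 < a.re) (hb : 0 < b.re) :
    Integrable (logisticDensity a b) := by
  have h := (integrableOn_image_iff_integrableOn_abs_deriv_smul MeasurableSet.univ
    (fun u _ ↦ (Real.hasDerivAt_sigmoid u).hasDerivWithinAt) Real.sigmoid_injective.injOn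
    (fun x : ℝ ↦ (x : ℂ) ^ (b - 1) * (1 - (x : ℂ)) ^ (a - 1))).1
    (by rw [image_univ, Real.range_sigmoid]; exact betaIntegrand_integrableOn hb ha)
  rw [integrableOn_univ] at h
  exact h.congr (ae_of_all _ fun u ↦ (logisticDensity_eq a b u).symm)

theorem integral_logisticDensity {a b : ℂ} (ha : 0 < a.re) (hb : 0 < b.re) :
    ∫ u, logisticDensity a b u = Gamma a * Gamma b / Gamma (a + b) := by
  have h := integral_image_eq_integral_abs_deriv_smul MeasurableSet.univ
    (fun u _ ↦ (Real.hasDerivAt_sigmoid u).hasDerivWithinAt) Real.sigmoid_injective.injOn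
    (fun x : ℝ ↦ (x : ℂ) ^ (b - 1) * (1 - (x : ℂ)) ^ (a - 1))
  rw [image_univ, Real.range_sigmoid, integral_betaIntegrand hb ha, Measure.restrict_univ] at h
  rw [mul_comm, add_comm, h]
  exact integral_congr_ae (ae_of_all _ fun u ↦ logisticDensity_eq a b u)

/-- The squared modulus of the density with parameters `a, b` is the modulus of the one with
parameters `2a, 2b`. -/
theorem memLp_logisticDensity {a b : ℂ} (ha : 0 < a.re) (hb : 0 < b.re) :
    MemLp (logisticDensity a b) 2 := by
  rw [memLp_two_iff_integrable_sq_norm (integrable_logisticDensity ha hb).aestronglyMeasurable]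
  have h := (integrable_logisticDensity (a := 2 * a) (b := 2 * b) (by simpa using ha)
    (by simpa using hb)).norm
  refine h.congr (ae_of_all _ fun u ↦ ?_)
  simp only [logisticDensity, norm_mul, mul_pow,
    Complex.norm_cpow_eq_rpow_re_of_pos (Real.sigmoid_pos _)]
  rw [← Real.rpow_mul_natCast (Real.sigmoid_nonneg _), ← Real.rpow_mul_natCast
    (Real.sigmoid_nonneg _)]
  simp [mul_comm]

theorem logisticDensity_mul_neg (a b a' b' : ℂ) (u : ℝ) :
    logisticDensity a b u * logisticDensity a' b' (-u) = logisticDensity (a + b') (b + a') u := by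
  have h0 : (Real.sigmoid u : ℂ) ≠ 0 := by exact_mod_cast (Real.sigmoid_pos u).ne'
  have h1 : (Real.sigmoid (-u) : ℂ) ≠ 0 := by exact_mod_cast (Real.sigmoid_pos (-u)).ne'
  simp only [logisticDensity, neg_neg, Complex.cpow_add _ _ h0, Complex.cpow_add _ _ h1]
  ring

/-- Since `exp u = σ(u) / σ(-u)`, a Fourier factor only shifts the parameters. -/
theorem exp_mul_logisticDensity (a b : ℂ) (y u : ℝ) :
    cexp (I * u * y) * logisticDensity a b u = logisticDensity (a - y * I) (b + y * I) u := by
  have h0 : (Real.sigmoid u : ℂ) ≠ 0 := by exact_mod_cast (Real.sigmoid_pos u).ne'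
  have h1 : (Real.sigmoid (-u) : ℂ) ≠ 0 := by exact_mod_cast (Real.sigmoid_pos (-u)).ne'
  have hl : Complex.log (Real.sigmoid (-u)) = Complex.log (Real.sigmoid u) - u := by
    rw [← Real.sigmoid_mul_rexp_neg, ← Complex.ofReal_log (by have := Real.sigmoid_pos u; positivity),
      ← Complex.ofReal_log (Real.sigmoid_nonneg u), Real.log_mul (Real.sigmoid_pos u).ne'
      (Real.exp_ne_zero _), Real.log_exp]
    push_cast; ring
  simp only [logisticDensity, Complex.cpow_def_of_ne_zero h0, Complex.cpow_def_of_ne_zero h1,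
    ← Complex.exp_add, hl]
  congr 1; ring

/-- The function equal to `exp (-a u) * (1 - exp (-u)) ^ (c - 1)` for `u > 0` and to `0` for
`u ≤ 0`: the pull-back of the Beta density under `t = exp (-u)`. -/
noncomputable def halfLineDensity (a c : ℂ) : ℝ → ℂ :=
  (Ioi 0).indicator fun u ↦ cexp (-a * u) * ((1 - Real.exp (-u) : ℝ) : ℂ) ^ (c - 1)

theorem image_exp_neg_Ioi : (fun u : ℝ ↦ Real.exp (-u)) '' Ioi 0 = Ioo 0 1 := by
  ext x
  simp only [mem_image, mem_Ioi, mem_Ioo]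
  constructor
  · rintro ⟨u, hu, rfl⟩
    exact ⟨Real.exp_pos _, by simpa using hu⟩
  · rintro ⟨h0, h1⟩
    exact ⟨-Real.log x, by simpa using Real.log_neg h0 h1, by simp [Real.exp_log h0]⟩

theorem hasDerivWithinAt_exp_neg (u : ℝ) (s : Set ℝ) :
    HasDerivWithinAt (fun u : ℝ ↦ Real.exp (-u)) (-Real.exp (-u)) s u := by
  simpa using ((hasDerivAt_id u).neg.exp).hasDerivWithinAt (s := s)

/-- The density as Jacobian of `u ↦ exp (-u)` times the Beta integrand at `exp (-u)`. -/
theorem halfLineDensity_eq (a c : ℂ) (u : ℝ) :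
    cexp (-a * u) * ((1 - Real.exp (-u) : ℝ) : ℂ) ^ (c - 1) = |-Real.exp (-u)| •
      ((Real.exp (-u) : ℂ) ^ (a - 1) * (1 - (Real.exp (-u) : ℂ)) ^ (c - 1)) := by
  rw [abs_neg, abs_of_pos (Real.exp_pos _), Complex.real_smul, ← mul_assoc]
  have h0 : (Real.exp (-u) : ℂ) ≠ 0 := by exact_mod_cast (Real.exp_ne_zero _)
  rw [Complex.cpow_sub _ _ h0, Complex.cpow_one, mul_div_cancel₀ _ h0,
    Complex.cpow_def_of_ne_zero h0, ← Complex.ofReal_log (Real.exp_pos _).le, Real.log_exp]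
  push_cast
  congr 2; ring

theorem injOn_exp_neg : InjOn (fun u : ℝ ↦ Real.exp (-u)) (Ioi 0) :=
  (Real.exp_injective.comp neg_injective).injOn

theorem integrable_halfLineDensity {a c : ℂ} (ha : 0 < a.re) (hc : 0 < c.re) :
    Integrable (halfLineDensity a c) := by
  have h := (integrableOn_image_iff_integrableOn_abs_deriv_smul measurableSet_Ioi
    (fun u _ ↦ hasDerivWithinAt_exp_neg u _) injOn_exp_neg
    (fun x : ℝ ↦ (x : ℂ) ^ (a - 1) * (1 - (x : ℂ)) ^ (c - 1))).1
    (by rw [image_exp_neg_Ioi]; exact betaIntegrand_integrableOn ha hc)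
  rw [halfLineDensity, integrable_indicator_iff measurableSet_Ioi]
  exact h.congr (ae_of_all _ fun u ↦ (halfLineDensity_eq a c u).symm)

theorem integral_halfLineDensity {a c : ℂ} (ha : 0 < a.re) (hc : 0 < c.re) :
    ∫ u, halfLineDensity a c u = Gamma a * Gamma c / Gamma (a + c) := by
  have h := integral_image_eq_integral_abs_deriv_smul measurableSet_Ioi
    (fun u _ ↦ hasDerivWithinAt_exp_neg u _) injOn_exp_neg
    (fun x : ℝ ↦ (x : ℂ) ^ (a - 1) * (1 - (x : ℂ)) ^ (c - 1))
  rw [image_exp_neg_Ioi, integral_betaIntegrand ha hc] at h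
  rw [h, halfLineDensity, MeasureTheory.integral_indicator measurableSet_Ioi]
  exact integral_congr_ae (ae_of_all _ fun u ↦ halfLineDensity_eq a c u)

/-- The squared modulus of the density with parameters `a, c` is the modulus of the one with
parameters `2a, 2c - 1`; the singularity at `u = 0` is square integrable as `1 / 2 < re c`. -/
theorem memLp_halfLineDensity {a c : ℂ} (ha : 0 < a.re) (hc : 1 / 2 < c.re) :
    MemLp (halfLineDensity a c) 2 := by
  rw [memLp_two_iff_integrable_sq_norm
    (integrable_halfLineDensity ha (by linarith)).aestronglyMeasurable]
  have h := (integrable_halfLineDensity (a := 2 * a) (c := 2 * c - 1) (by simpa using ha)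
    (by simp; linarith)).norm
  refine h.congr (ae_of_all _ fun u ↦ ?_)
  by_cases hu : u ∈ Ioi (0 : ℝ)
  · have h1 : 0 < 1 - Real.exp (-u) := by simpa using hu
    simp only [halfLineDensity, indicator_of_mem hu, norm_mul, mul_pow,
      Complex.norm_cpow_eq_rpow_re_of_pos h1, Complex.norm_exp]
    rw [← Real.rpow_mul_natCast h1.le, ← Real.exp_nat_mul]
    congr 2
    · simp; ring
    · simp; ring
  · simp [halfLineDensity, indicator_of_notMem hu]

theorem halfLineDensity_mul_neg (a c a' c' : ℂ) (u : ℝ) :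
    halfLineDensity a c u * halfLineDensity a' c' (-u) = 0 := by
  by_cases hu : u ∈ Ioi (0 : ℝ)
  · have : -u ∉ Ioi (0 : ℝ) := by simpa using le_of_lt hu
    simp [halfLineDensity, indicator_of_notMem this]
  · simp [halfLineDensity, indicator_of_notMem hu]

theorem exp_mul_halfLineDensity (a c : ℂ) (y u : ℝ) :
    cexp (I * u * y) * halfLineDensity a c u = halfLineDensity (a - y * I) c u := by
  by_cases hu : u ∈ Ioi (0 : ℝ)
  · simp only [halfLineDensity, indicator_of_mem hu, ← mul_assoc, ← Complex.exp_add]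
    congr 2; ring
  · simp [halfLineDensity, indicator_of_notMem hu]

/-! ### The two Mellin–Barnes integrals -/

/-- Barnes' first lemma, for a vertical line separating the two sequences of poles. -/
theorem barnes_first {a b a' b' : ℂ} (ha : 0 < a.re) (hb : 0 < b.re) (ha' : 0 < a'.re)
    (hb' : 0 < b'.re) :
    Integrable (fun y : ℝ ↦ Gamma (a - y * I) * Gamma (b + y * I) *
      (Gamma (a' - y * I) * Gamma (b' + y * I))) ∧
    ∫ y : ℝ, Gamma (a - y * I) * Gamma (b + y * I) * (Gamma (a' - y * I) * Gamma (b' + y * I)) =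
      2 * Real.pi * (Gamma (a + b) * Gamma (a' + b') * Gamma (a + b') * Gamma (b + a') /
        Gamma (a + b + a' + b')) := by
  have hne : Gamma (a + b) ≠ 0 := Gamma_ne_zero_of_re_pos (by simp; linarith)
  have hne' : Gamma (a' + b') ≠ 0 := Gamma_ne_zero_of_re_pos (by simp; linarith)
  have key : ∀ {a b : ℂ}, 0 < a.re → 0 < b.re → ∀ y : ℝ,
      Gamma (a - y * I) * Gamma (b + y * I) / Gamma (a + b) =
        ∫ u : ℝ, cexp (I * u * y) * logisticDensity a b u := by
    intro a b ha hb y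
    simp_rw [exp_mul_logisticDensity]
    rw [integral_logisticDensity (by simpa using ha) (by simpa using hb)]
    congr 2; ring
  obtain ⟨hi, he⟩ := parseval (integrable_logisticDensity ha hb) (memLp_logisticDensity ha hb)
    (integrable_logisticDensity ha' hb') (memLp_logisticDensity ha' hb') (key ha hb) (key ha' hb')
  simp_rw [logisticDensity_mul_neg] at he
  rw [integral_logisticDensity (by simp; linarith) (by simp; linarith)] at he
  have hfun : (fun y : ℝ ↦ Gamma (a - y * I) * Gamma (b + y * I) *
      (Gamma (a' - y * I) * Gamma (b' + y * I))) =
      fun y : ℝ ↦ (Gamma (a + b) * Gamma (a' + b')) *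
        (Gamma (a - y * I) * Gamma (b + y * I) / Gamma (a + b) *
          (Gamma (a' - y * I) * Gamma (b' + y * I) / Gamma (a' + b'))) := by
    ext y; field_simp
  rw [hfun]
  refine ⟨hi.const_mul _, ?_⟩
  rw [MeasureTheory.integral_const_mul, he, show a + b + a' + b' = a + b' + (b + a') by ring]
  ring

/-- All poles of the integrand lie on the same side of the line of integration, so the integral
vanishes. On the Fourier side, `f u` and `g (-u)` have disjoint supports. -/
theorem vanishing {a c a' c' : ℂ} (ha : 0 < a.re) (hc : 1 / 2 < c.re) (ha' : 0 < a'.re)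
    (hc' : 1 / 2 < c'.re) :
    Integrable (fun y : ℝ ↦ Gamma (a - y * I) / Gamma (a - y * I + c) *
      (Gamma (a' - y * I) / Gamma (a' - y * I + c'))) ∧
    ∫ y : ℝ, Gamma (a - y * I) / Gamma (a - y * I + c) *
      (Gamma (a' - y * I) / Gamma (a' - y * I + c')) = 0 := by
  have hne : Gamma c ≠ 0 := Gamma_ne_zero_of_re_pos (by linarith)
  have hne' : Gamma c' ≠ 0 := Gamma_ne_zero_of_re_pos (by linarith)
  have key : ∀ {a c : ℂ}, 0 < a.re → 1 / 2 < c.re → ∀ y : ℝ,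
      Gamma (a - y * I) * Gamma c / Gamma (a - y * I + c) =
        ∫ u : ℝ, cexp (I * u * y) * halfLineDensity a c u := by
    intro a c ha hc y
    simp_rw [exp_mul_halfLineDensity]
    rw [integral_halfLineDensity (by simpa using ha) (by linarith)]
  obtain ⟨hi, he⟩ := parseval (integrable_halfLineDensity ha (by linarith))
    (memLp_halfLineDensity ha hc) (integrable_halfLineDensity ha' (by linarith))
    (memLp_halfLineDensity ha' hc') (key ha hc) (key ha' hc')
  simp_rw [halfLineDensity_mul_neg] at he
  have hfun : (fun y : ℝ ↦ Gamma (a - y * I) / Gamma (a - y * I + c) *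
      (Gamma (a' - y * I) / Gamma (a' - y * I + c'))) =
      fun y : ℝ ↦ (Gamma c * Gamma c')⁻¹ *
        (Gamma (a - y * I) * Gamma c / Gamma (a - y * I + c) *
          (Gamma (a' - y * I) * Gamma c' / Gamma (a' - y * I + c'))) := by
    ext y; field_simp
  rw [hfun]
  refine ⟨hi.const_mul _, ?_⟩
  rw [MeasureTheory.integral_const_mul, he]
  simp

/-! ### Trigonometric and Gamma function identities -/

/-- The reflection formula, inverted so as to hold for every `z`: at the integers both sides are
`0`, by the junk values of `Gamma` at its poles and of division by zero. -/
theorem inv_Gamma_mul_Gamma_one_sub (z : ℂ) :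
    (Gamma z * Gamma (1 - z))⁻¹ = Complex.sin (Real.pi * z) / Real.pi := by
  rw [Complex.Gamma_mul_Gamma_one_sub, inv_div]

theorem inv_Gamma_one_sub {z : ℂ} (hz : 0 < z.re) :
    (Gamma (1 - z))⁻¹ = Gamma z * (Complex.sin (Real.pi * z) / Real.pi) := by
  rw [← inv_Gamma_mul_Gamma_one_sub, mul_inv, mul_inv_cancel_left₀ (Gamma_ne_zero_of_re_pos hz)]

/-- The linear relation among sine products that splits the integrand. The variables `ν`, `s`, `w`,
`t` stand for `π` times the parameters and the integration variable of the main theorem. -/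
theorem sin_mul_sin_decomposition (ν s w t : ℂ) :
    Complex.sin (w - s) * (Complex.sin (t + ν / 2) * Complex.sin (t - ν / 2)) =
      Complex.cos ν / 2 * (Complex.sin (w - s) + Complex.sin w - Complex.sin s) -
      Complex.sin w * (Complex.sin ((ν - s - Real.pi) / 2 + t) *
        Complex.sin (t - (Real.pi + s + ν) / 2)) +
      Complex.sin s * (Complex.sin ((ν + w + Real.pi) / 2 - t) *
        Complex.sin ((w + Real.pi - ν) / 2 - t)) := by
  have prod : ∀ a b : ℂ, Complex.sin a * Complex.sin b =
      (Complex.cos (a - b) - Complex.cos (a + b)) / 2 := by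
    intro a b; rw [Complex.cos_sub, Complex.cos_add]; ring
  rw [prod, prod, prod,
    show t + ν / 2 - (t - ν / 2) = ν by ring, show t + ν / 2 + (t - ν / 2) = 2 * t by ring,
    show (ν - s - Real.pi) / 2 + t - (t - (Real.pi + s + ν) / 2) = ν by ring,
    show (ν - s - Real.pi) / 2 + t + (t - (Real.pi + s + ν) / 2) = 2 * t - s - Real.pi by ring,
    show (ν + w + Real.pi) / 2 - t - ((w + Real.pi - ν) / 2 - t) = ν by ring,
    show (ν + w + Real.pi) / 2 - t + ((w + Real.pi - ν) / 2 - t) = w - 2 * t + Real.pi by ring,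
    Complex.cos_sub_pi, Complex.cos_add_pi, Complex.cos_sub, Complex.cos_sub, Complex.sin_sub]
  ring

/-- Rewriting of the value given by Barnes' first lemma: the duplication formula evaluates
`Γ(x) / Γ(2x)` through `Γ(x + 1/2)`, which reflection exchanges for `cos (π x) * Γ(1/2 - x)`. Here
`p` and `q` stand for `cos (π s / 2)` and `cos (π w / 2)`. -/
theorem gamma_quotient_eval {x p q cν gp gm cpq : ℂ} (hx : 0 < x.re) (hx' : x.re < 1 / 2)
    (hcpq : cpq = Complex.cos (Real.pi * x)) :
    cν * p * q / Real.pi ^ 2 * (gp * gm * Gamma x * Gamma x / Gamma (2 * x)) =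
      cpq * ((2 : ℂ) ^ (1 - 2 * x) * cν / (Real.sqrt Real.pi : ℂ) *
        (Gamma (1 / 2 - x) * Gamma x * gm * gp) * (p / Real.pi * (q / Real.pi))) := by
  have hpi : (Real.pi : ℂ) ≠ 0 := by exact_mod_cast Real.pi_ne_zero
  have hR : (Real.sqrt Real.pi : ℂ) ≠ 0 := by
    exact_mod_cast (Real.sqrt_pos.2 Real.pi_pos).ne'
  have hRR : (Real.sqrt Real.pi : ℂ) * (Real.sqrt Real.pi : ℂ) = Real.pi := by
    exact_mod_cast Real.mul_self_sqrt Real.pi_pos.le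
  have h2x : Gamma (2 * x) ≠ 0 := Gamma_ne_zero_of_re_pos (by simpa using hx)
  have hh : Gamma (x + 1 / 2) ≠ 0 := Gamma_ne_zero_of_re_pos (by simp; linarith)
  have hdup := Complex.Gamma_mul_Gamma_add_half x
  have hrefl := inv_Gamma_mul_Gamma_one_sub (x + 1 / 2)
  rw [show 1 - (x + 1 / 2) = 1 / 2 - x by ring,
    show Real.pi * (x + 1 / 2) = Real.pi * x + Real.pi / 2 by ring, Complex.sin_add_pi_div_two,
    ← hcpq] at hrefl
  have hm : Gamma (1 / 2 - x) ≠ 0 := Gamma_ne_zero_of_re_pos (by simp; linarith)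
  have hc : cpq = Real.pi / (Gamma (x + 1 / 2) * Gamma (1 / 2 - x)) := by
    rw [eq_div_iff hpi] at hrefl
    rw [← hrefl]; field_simp
  have hG : Gamma x = Gamma (2 * x) * 2 ^ (1 - 2 * x) * (Real.sqrt Real.pi : ℂ) /
      Gamma (x + 1 / 2) := by
    rw [eq_div_iff hh, hdup]
  have hcore : Gamma x / Gamma (2 * x) =
      cpq * 2 ^ (1 - 2 * x) / (Real.sqrt Real.pi : ℂ) * Gamma (1 / 2 - x) := by
    rw [hG, hc, ← hRR]
    generalize Gamma (x + 1 / 2) = A at *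
    generalize Gamma (1 / 2 - x) = B at *
    generalize Gamma (2 * x) = C at *
    generalize (2 : ℂ) ^ (1 - 2 * x) = E at *
    field_simp
  linear_combination cν * p * q / Real.pi ^ 2 * gp * gm * Gamma x * hcore

/-! ### Evaluation of the integral -/

/-- Evaluation of the Mellin–Barnes integral arising from the product of two associated
Legendre functions of the second kind. -/
theorem mellin_barnes_legendre_product (ν s w : ℂ) (γ : ℝ)
    (hν₁ : 0 < ν.re) (hν₂ : ν.re < 1 / 2)
    (hs₁ : -1 < s.re) (hs₂ : s.re < 0)
    (hw₁ : -1 < w.re) (hw₂ : w.re < -(1 / 2))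
    (hγ₁ : (1 + (s + ν).re) / 2 < γ) (hγ₂ : γ < (1 + (w - ν).re) / 2) :
    (2 * Real.pi * Complex.I)⁻¹ *
      (Complex.I * ∫ τ' : ℝ,
        (Complex.Gamma ((ν + w + 1) / 2 - ((γ : ℂ) + τ' * Complex.I)) *
          Complex.Gamma ((w + 1 - ν) / 2 - ((γ : ℂ) + τ' * Complex.I)) *
          Complex.Gamma ((ν - s - 1) / 2 + ((γ : ℂ) + τ' * Complex.I)) *
          Complex.Gamma (((γ : ℂ) + τ' * Complex.I) - (1 + s + ν) / 2)) /
        (Complex.Gamma (1 + ν / 2 - ((γ : ℂ) + τ' * Complex.I)) *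
          Complex.Gamma (1 - ν / 2 - ((γ : ℂ) + τ' * Complex.I)) *
          Complex.Gamma (((γ : ℂ) + τ' * Complex.I) + ν / 2) *
          Complex.Gamma (((γ : ℂ) + τ' * Complex.I) - ν / 2))) =
      (2 : ℂ) ^ (s - w + 1) * Complex.cos (Real.pi * ν) / (Real.sqrt Real.pi : ℂ) *
        (Complex.Gamma ((1 + s - w) / 2) * Complex.Gamma ((w - s) / 2) *
          Complex.Gamma ((w - s) / 2 - ν) * Complex.Gamma ((w - s) / 2 + ν)) /
        (Complex.Gamma ((1 + s) / 2) * Complex.Gamma ((1 - s) / 2) *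
          Complex.Gamma ((1 + w) / 2) * Complex.Gamma ((1 - w) / 2)) := by
  have hpi : (Real.pi : ℂ) ≠ 0 := by exact_mod_cast Real.pi_ne_zero
  simp only [add_re, sub_re] at hγ₁ hγ₂
  obtain ⟨x, hx⟩ : ∃ x : ℂ, x = (w - s) / 2 := ⟨_, rfl⟩
  have hxre : x.re = (w.re - s.re) / 2 := by simp [hx]
  obtain ⟨a₁, ha₁⟩ : ∃ a : ℂ, a = (ν + w + 1) / 2 - γ := ⟨_, rfl⟩
  obtain ⟨a₂, ha₂⟩ : ∃ a : ℂ, a = (w + 1 - ν) / 2 - γ := ⟨_, rfl⟩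
  obtain ⟨b₁, hb₁⟩ : ∃ b : ℂ, b = (ν - s - 1) / 2 + γ := ⟨_, rfl⟩
  obtain ⟨b₂, hb₂⟩ : ∃ b : ℂ, b = γ - (1 + s + ν) / 2 := ⟨_, rfl⟩
  have ha₁' : 0 < a₁.re := by simp [ha₁]; linarith
  have ha₂' : 0 < a₂.re := by simp [ha₂]; linarith
  have hb₁' : 0 < b₁.re := by simp [hb₁]; linarith
  have hb₂' : 0 < b₂.re := by simp [hb₂]; linarith
  have hc : 1 / 2 < (1 - x).re := by simp [hxre]; linarith
  obtain ⟨hGi, hGe⟩ := barnes_first ha₁' hb₁' ha₂' hb₂'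
  obtain ⟨hKi, hKe⟩ := vanishing ha₁' hc ha₂' hc
  obtain ⟨hLi, hLe⟩ := vanishing hb₁' hc hb₂' hc
  -- `vanishing` has its poles on the `a` side; `y ↦ -y` adapts it to the `b` side.
  replace hLi := hLi.comp_neg
  rw [← integral_neg_eq_self] at hLe
  set G : ℝ → ℂ := fun y ↦ Gamma (a₁ - y * I) * Gamma (b₁ + y * I) *
    (Gamma (a₂ - y * I) * Gamma (b₂ + y * I)) with hG
  set K : ℝ → ℂ := fun y ↦ Gamma (a₁ - y * I) / Gamma (a₁ - y * I + (1 - x)) *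
    (Gamma (a₂ - y * I) / Gamma (a₂ - y * I + (1 - x))) with hK
  set L : ℝ → ℂ := fun y ↦ Gamma (b₁ - (-y : ℝ) * I) / Gamma (b₁ - (-y : ℝ) * I + (1 - x)) *
    (Gamma (b₂ - (-y : ℝ) * I) / Gamma (b₂ - (-y : ℝ) * I + (1 - x))) with hL
  set F : ℝ → ℂ := fun τ' ↦ _ / _ with hF
  change (2 * Real.pi * Complex.I)⁻¹ * (Complex.I * ∫ y, F y) = _
  have hdecomp : ∀ y, Complex.sin (Real.pi * w - Real.pi * s) * F y =
      Complex.cos (Real.pi * ν) / 2 * (Complex.sin (Real.pi * w - Real.pi * s) +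
        Complex.sin (Real.pi * w) - Complex.sin (Real.pi * s)) / Real.pi ^ 2 * G y -
      Complex.sin (Real.pi * w) * K y + Complex.sin (Real.pi * s) * L y := by
    intro y
    have hτ := sin_mul_sin_decomposition (Real.pi * ν) (Real.pi * s) (Real.pi * w)
      (Real.pi * (γ + y * I))
    have e₁ := inv_Gamma_one_sub (z := b₁ + y * I) (by simpa using hb₁')
    have e₂ := inv_Gamma_one_sub (z := b₂ + y * I) (by simpa using hb₂')
    have e₃ := inv_Gamma_one_sub (z := a₁ - y * I) (by simpa using ha₁')
    have e₄ := inv_Gamma_one_sub (z := a₂ - y * I) (by simpa using ha₂')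
    have hKy : K y = G y / Real.pi ^ 2 * (Complex.sin (Real.pi * (b₁ + y * I)) *
        Complex.sin (Real.pi * (b₂ + y * I))) := by
      -- `a₁ + b₂ = a₂ + b₁ = x` is what matches the shift `1 - x` with the reflection formula.
      simp only [hK, hG, div_eq_mul_inv]
      rw [show a₁ - y * I + (1 - x) = 1 - (b₂ + y * I) by rw [ha₁, hb₂, hx]; ring,
        show a₂ - y * I + (1 - x) = 1 - (b₁ + y * I) by rw [ha₂, hb₁, hx]; ring, e₁, e₂]
      field_simp
    have hLy : L y = G y / Real.pi ^ 2 * (Complex.sin (Real.pi * (a₁ - y * I)) *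
        Complex.sin (Real.pi * (a₂ - y * I))) := by
      simp only [hL, hG, div_eq_mul_inv, ofReal_neg, neg_mul, sub_neg_eq_add]
      rw [show b₁ + y * I + (1 - x) = 1 - (a₂ - y * I) by rw [ha₂, hb₁, hx]; ring,
        show b₂ + y * I + (1 - x) = 1 - (a₁ - y * I) by rw [ha₁, hb₂, hx]; ring, e₃, e₄]
      field_simp
    have hFy : F y = G y / Real.pi ^ 2 * (Complex.sin (Real.pi * (γ + y * I) + Real.pi * ν / 2) *
        Complex.sin (Real.pi * (γ + y * I) - Real.pi * ν / 2)) := by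
      have r₁ := inv_Gamma_mul_Gamma_one_sub (γ + y * I + ν / 2)
      have r₂ := inv_Gamma_mul_Gamma_one_sub (γ + y * I - ν / 2)
      rw [eq_div_iff hpi] at r₁ r₂
      rw [show Real.pi * (γ + y * I) + Real.pi * ν / 2 = Real.pi * (γ + y * I + ν / 2) by ring,
        show Real.pi * (γ + y * I) - Real.pi * ν / 2 = Real.pi * (γ + y * I - ν / 2) by ring,
        ← r₁, ← r₂]
      simp only [hF, hG]
      rw [show (ν + w + 1) / 2 - (γ + y * I) = a₁ - y * I by rw [ha₁]; ring,
        show (w + 1 - ν) / 2 - (γ + y * I) = a₂ - y * I by rw [ha₂]; ring,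
        show (ν - s - 1) / 2 + (γ + y * I) = b₁ + y * I by rw [hb₁]; ring,
        show (γ + y * I) - (1 + s + ν) / 2 = b₂ + y * I by rw [hb₂]; ring,
        show 1 + ν / 2 - (γ + y * I) = 1 - (γ + y * I - ν / 2) by ring,
        show 1 - ν / 2 - (γ + y * I) = 1 - (γ + y * I + ν / 2) by ring]
      field_simp
    rw [hKy, hLy, hFy]
    rw [show Real.pi * (b₁ + y * I) =
        (Real.pi * ν - Real.pi * s - Real.pi) / 2 + Real.pi * (γ + y * I) by rw [hb₁]; ring,
      show Real.pi * (b₂ + y * I) =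
        Real.pi * (γ + y * I) - (Real.pi + Real.pi * s + Real.pi * ν) / 2 by rw [hb₂]; ring,
      show Real.pi * (a₁ - y * I) =
        (Real.pi * ν + Real.pi * w + Real.pi) / 2 - Real.pi * (γ + y * I) by rw [ha₁]; ring,
      show Real.pi * (a₂ - y * I) =
        (Real.pi * w + Real.pi - Real.pi * ν) / 2 - Real.pi * (γ + y * I) by rw [ha₂]; ring]
    linear_combination G y / Real.pi ^ 2 * hτ
  -- Only the `G` term survives integration.
  have hint := integral_congr_ae (μ := volume) (ae_of_all _ hdecomp)
  have hsplit : ∀ c₁ c₂ c₃ : ℂ,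
      ∫ y, (c₁ * G y - c₂ * K y + c₃ * L y) = c₁ * ∫ y, G y := by
    intro c₁ c₂ c₃
    have hGK : Integrable (fun y ↦ c₁ * G y - c₂ * K y) :=
      (hGi.const_mul _).sub (hKi.const_mul _)
    have hK0 : ∫ y, K y = 0 := hKe
    have hL0 : ∫ y, L y = 0 := hLe
    rw [MeasureTheory.integral_add hGK (hLi.const_mul _),
      MeasureTheory.integral_sub (hGi.const_mul _) (hKi.const_mul _),
      MeasureTheory.integral_const_mul, MeasureTheory.integral_const_mul,
      MeasureTheory.integral_const_mul, hK0, hL0, mul_zero, mul_zero, sub_zero, add_zero]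
  rw [hsplit, MeasureTheory.integral_const_mul, show ∫ y, G y = _ from hGe] at hint
  -- `0 < re x < 1 / 2`, so the factor `sin π(w - s) = 2 sin πx cos πx` can be cancelled.
  have hsin : Complex.sin (Real.pi * x) ≠ 0 := by
    intro h
    obtain ⟨k, hk⟩ := Complex.sin_eq_zero_iff.1 h
    have hxk : x = k := mul_left_cancel₀ hpi (by rw [hk]; ring)
    have hk' : x.re = k := by rw [hxk]; simp
    have h1 : (0 : ℝ) < k := by rw [← hk', hxre]; linarith
    have h2 : (k : ℝ) < 1 := by rw [← hk', hxre]; linarith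
    norm_cast at h1 h2
    omega
  have hcos : Complex.cos (Real.pi * x) ≠ 0 := by
    intro h
    obtain ⟨k, hk⟩ := Complex.cos_eq_zero_iff.1 h
    have hxk : 2 * x = 2 * k + 1 := mul_left_cancel₀ hpi (by linear_combination 2 * hk)
    have hk' : 2 * x.re = 2 * k + 1 := by simpa using congrArg Complex.re hxk
    have h1 : (-1 : ℝ) < k := by linarith
    have h2 : (k : ℝ) < 0 := by linarith
    norm_cast at h1 h2
    omega
  have hD : Complex.sin (Real.pi * w - Real.pi * s) =
      2 * Complex.sin (Real.pi * x) * Complex.cos (Real.pi * x) := by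
    rw [← Complex.sin_two_mul, hx]; congr 1; ring
  have hsum : Complex.sin (Real.pi * w) - Complex.sin (Real.pi * s) =
      2 * Complex.sin (Real.pi * x) * Complex.cos (Real.pi * w / 2 + Real.pi * s / 2) := by
    rw [Complex.sin_sub_sin, hx]
    congr 2 <;> [(congr 1; ring); ring]
  have hcosx : Complex.cos (Real.pi * x) = Complex.cos (Real.pi * w / 2 - Real.pi * s / 2) := by
    rw [hx]; congr 1; ring
  have hred : Complex.cos (Real.pi * x) * ∫ y, F y = 2 * Real.pi *
      (Complex.cos (Real.pi * ν) * Complex.cos (Real.pi * s / 2) * Complex.cos (Real.pi * w / 2) /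
        Real.pi ^ 2 * (Gamma (x + ν) * Gamma (x - ν) * Gamma x * Gamma x / Gamma (2 * x))) := by
    have hprod : Complex.cos (Real.pi * x) +
        Complex.cos (Real.pi * w / 2 + Real.pi * s / 2) =
        2 * Complex.cos (Real.pi * s / 2) * Complex.cos (Real.pi * w / 2) := by
      rw [hcosx, Complex.cos_sub, Complex.cos_add]; ring
    rw [add_sub_assoc, hsum, hD, ← mul_add, hprod,
      show a₁ + b₁ + a₂ + b₂ = 2 * x by rw [ha₁, ha₂, hb₁, hb₂, hx]; ring,
      show a₁ + b₁ = x + ν by rw [ha₁, hb₁, hx]; ring,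
      show a₂ + b₂ = x - ν by rw [ha₂, hb₂, hx]; ring,
      show a₁ + b₂ = x by rw [ha₁, hb₂, hx]; ring,
      show b₁ + a₂ = x by rw [ha₂, hb₁, hx]; ring] at hint
    refine mul_left_cancel₀ (mul_ne_zero two_ne_zero hsin) ?_
    linear_combination hint
  rw [gamma_quotient_eval (by rw [hxre]; linarith) (by rw [hxre]; linarith) rfl] at hred
  have hFval : ∫ y, F y = 2 * Real.pi * _ :=
    mul_left_cancel₀ hcos (hred.trans (mul_left_comm _ _ _))
  have hs : (Gamma ((1 + s) / 2) * Gamma ((1 - s) / 2))⁻¹ =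
      Complex.cos (Real.pi * s / 2) / Real.pi := by
    rw [show (1 - s) / 2 = 1 - (1 + s) / 2 by ring, inv_Gamma_mul_Gamma_one_sub,
      show Real.pi * ((1 + s) / 2) = Real.pi * s / 2 + Real.pi / 2 by ring,
      Complex.sin_add_pi_div_two]
  have hw : (Gamma ((1 + w) / 2) * Gamma ((1 - w) / 2))⁻¹ =
      Complex.cos (Real.pi * w / 2) / Real.pi := by
    rw [show (1 - w) / 2 = 1 - (1 + w) / 2 by ring, inv_Gamma_mul_Gamma_one_sub,
      show Real.pi * ((1 + w) / 2) = Real.pi * w / 2 + Real.pi / 2 by ring,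
      Complex.sin_add_pi_div_two]
  have hI : (2 * Real.pi * I)⁻¹ * (I * (2 * Real.pi)) = 1 := by
    rw [mul_comm I]
    exact inv_mul_cancel₀ (by simp [hpi])
  rw [hFval, ← mul_assoc I, ← mul_assoc, hI, one_mul, ← hs, ← hw, ← hx,
    show s - w + 1 = 1 - 2 * x by rw [hx]; ring,
    show (1 + s - w) / 2 = 1 / 2 - x by rw [hx]; ring]
  generalize (2 : ℂ) ^ (1 - 2 * x) = E
  simp only [div_eq_mul_inv, mul_inv]
  ring
end
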